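/- ℙ-almost surely the following hold: if d ≥ 2 then ∫₀^∞ P^ω₀(X_t = 0) dt < ∞ (the walk X is transient); if d = 1 and α < 1 then ∫₀^∞ P^ω₀(X_t = 0) dt < ∞ (transient); and if d = 1 and 𝔼[z(0)] < ∞ then ∫₀^∞ P^ω₀(X_t = 0) dt = ∞ (the walk X is recurrent). -/

import Mathlib

open MeasureTheory ProbabilityTheory Filter Set

noncomputable section

/-- `n`-step transition probabilities of the discrete-time simple random walk on `ℤ^m`. -/
def srwKernel (m : ℕ) : ℕ → (Fin m → ℤ) → (Fin m → ℤ) → ℝ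
  | 0, x, y => if x = y then 1 else 0
  | n + 1, x, y =>
      (∑ i : Fin m, (srwKernel m n (Function.update x i (x i + 1)) y
        + srwKernel m n (Function.update x i (x i - 1)) y)) / (2 * m)

/-- Transition kernel of the continuous-time simple random walk on `ℤ^m` which jumps to
each of its `2m` nearest neighbours at rate `1` (total jump rate `2m`). -/
def heatKernel (m : ℕ) (t : ℝ) (x y : Fin m → ℤ) : ℝ :=
  ∑' n : ℕ, Real.exp (-(2 * m) * t) * ((2 * m) * t) ^ n / n.factorial * srwKernel m n x y

/-- `(P, S)` is (a realization of) the continuous-time simple random walk on `ℤ^m`: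
under `P x` the process `S` starts at `x`, has right-continuous (piecewise constant)
paths, and its finite-dimensional distributions are given by the heat kernel. -/
structure IsCTSRW (m : ℕ) {Ω : Type*} [MeasurableSpace Ω]
    (P : (Fin m → ℤ) → Measure Ω) (S : ℝ → Ω → (Fin m → ℤ)) : Prop where
  prob : ∀ x, IsProbabilityMeasure (P x)
  meas : Measurable fun p : ℝ × Ω => S p.1 p.2
  start : ∀ x, ∀ᵐ ω ∂ P x, S 0 ω = x
  rightCont : ∀ x, ∀ᵐ ω ∂ P x, ∀ t : ℝ, 0 ≤ t →
    ∃ ε > (0 : ℝ), ∀ u, t ≤ u → u < t + ε → S u ω = S t ω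
  fdd : ∀ x (n : ℕ) (t : Fin (n + 1) → ℝ), 0 ≤ t 0 →
    (∀ i : Fin n, t i.castSucc ≤ t i.succ) →
    ∀ y : Fin (n + 1) → (Fin m → ℤ),
      (P x {ω | ∀ i, S (t i) ω = y i}).toReal
        = heatKernel m (t 0) x (y 0)
          * ∏ i : Fin n, heatKernel m (t i.succ - t i.castSucc) (y i.castSucc) (y i.succ)

/-- `z` is an i.i.d. nonnegative random scenery on `ℤ^d` whose common upper tail decays
like `r^{-α+o(1)}`. -/
structure IsScenery (d : ℕ) (α : ℝ) {Ω : Type*} [MeasurableSpace Ω]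
    (μ : Measure Ω) (z : (Fin d → ℤ) → Ω → ℝ) : Prop where
  prob : IsProbabilityMeasure μ
  meas : ∀ x, Measurable (z x)
  nonneg : ∀ x ω, 0 ≤ z x ω
  indep : iIndepFun z μ
  ident : ∀ x, IdentDistrib (z x) (z 0) μ μ
  tail : Tendsto (fun r : ℝ => Real.log (μ {ω | r < z 0 ω}).toReal / Real.log r)
    atTop (nhds (-α))

/-- The random walk in random scenery `A(t) = ∫₀ᵗ z(S_u) du`. -/
def rwrs {Ωz Ωw : Type*} (d : ℕ) (z : (Fin d → ℤ) → Ωz → ℝ)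
    (S : ℝ → Ωw → (Fin d → ℤ)) (t : ℝ) (ζ : Ωz) (ω : Ωw) : ℝ :=
  ∫ u in Set.Ioc (0 : ℝ) t, z (S u ω) ζ

end
open MeasureTheory ProbabilityTheory Filter Set

noncomputable section

/-- The clock process `A²(t) = ∫₀ᵗ z(S²_u) du`, where `S²` is the second (ℤ^d-valued)
component of the walk on `ℤ^{1+d}`. -/
def clock (d : ℕ) {Ωz Ωw : Type*} (z : (Fin d → ℤ) → Ωz → ℝ)
    (S : ℝ → Ωw → (Fin (d + 1) → ℤ)) (t : ℝ) (ζ : Ωz) (ω : Ωw) : ℝ :=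
  ∫ u in Set.Ioc (0 : ℝ) t, z (fun i => S u ω i.succ) ζ

/-- The variable-speed random walk `X_t = (S¹_{A²(t)}, S²_t)` in the layered conductance
field `ω(x, x±e₁) = z(x₂)`, `ω(x, x±e_i) = 1` for `i ≥ 2` (coordinate `0` of the walk on
`ℤ^{1+d}` is the ℤ-coordinate, coordinates `1,…,d` form the ℤ^d-coordinate). -/
def layeredWalk (d : ℕ) {Ωz Ωw : Type*} (z : (Fin d → ℤ) → Ωz → ℝ)
    (S : ℝ → Ωw → (Fin (d + 1) → ℤ)) (t : ℝ) (ζ : Ωz) (ω : Ωw) : ℤ × (Fin d → ℤ) :=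
  (S (clock d z S t ζ ω) ω 0, fun i => S t ω i.succ)

/-- Euclidean norm of a point of `ℤ^{1+d} = ℤ × ℤ^d`. -/
def euclNormProd (d : ℕ) (x : ℤ × (Fin d → ℤ)) : ℝ :=
  Real.sqrt ((x.1 : ℝ) ^ 2 + ∑ i, (x.2 i : ℝ) ^ 2)

end

/-!
Write `p t ≍ t ^ (-1/2)` for the return probability of the walk on `ℤ`. The `ℤ`-component of the
walk is independent of the transversal one, so the quenched return probability at time `t` is
`E₀[p (A t); S_t = 0]`, where `S` is the walk on `ℤ^d` and `A t = ∫₀ᵗ z(S_u) du = ∑ y, L_t(y) z(y)`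
with `L_t` the local time of `S`.

Transience: `E₀ ∑ y, L_t(y) ^ 4 ≲ t ^ (5/2)`, so up to probability `t ^ (-6/5)` half of the time
`t` is spent at sites of local time at most `t ^ (9/10)`. For such a path, a Chernoff bound over the
scenery gives `A t ≥ t ^ ρ` off a stretched-exponentially small event, for some `ρ ≥ 9/10`, and for
some `ρ > 1` when `α < 1`. The annealed return probability is then at most of order
`t ^ (-(d + ρ) / 2)` up to integrable errors; it is integrable since `d + ρ > 2`, and Tonelli's
theorem makes the quenched one integrable for almost every scenery.

Recurrence: for `z` of finite mean, `A t` is of order `t` on average, so by Fatou's lemma almost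
every scenery has infinitely many dyadic blocks `(4 ^ n, 4 ^ (n + 1)]` on which the mean of `A`
given a return is `O(t)`. On each of them `p (A t)` is of order `t ^ (-1/2)` for a positive
fraction of the returns, and the block contributes at least a fixed amount to the Green integral.
-/

noncomputable section

open scoped ENNReal NNReal Topology

/-! ### Heat kernel of the simple random walk -/

/-- The uniform probability measure on `(-π, π]`, a model of the circle dual to `ℤ`. -/
def circleMeasure : Measure ℝ :=
  (ENNReal.ofReal (2 * Real.pi))⁻¹ • volume.restrict (Ioc (-Real.pi) Real.pi)

instance : IsProbabilityMeasure circleMeasure := by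
  constructor
  simp only [circleMeasure, Measure.smul_apply, smul_eq_mul, Measure.restrict_apply_univ,
    Real.volume_Ioc]
  rw [show Real.pi - -Real.pi = 2 * Real.pi by ring]
  exact ENNReal.inv_mul_cancel (by simp [Real.pi_pos]) ENNReal.ofReal_ne_top

lemma integral_circleMeasure (f : ℝ → ℝ) :
    ∫ θ, f θ ∂circleMeasure = (2 * Real.pi)⁻¹ * ∫ θ in (-Real.pi)..Real.pi, f θ := by
  rw [circleMeasure, integral_smul_measure,
    intervalIntegral.integral_of_le (by linarith [Real.pi_pos])]
  simp [ENNReal.toReal_inv, Real.pi_pos.le]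

lemma integral_cos_circleMeasure (a : ℤ) :
    ∫ θ, Real.cos (a * θ) ∂circleMeasure = if a = 0 then 1 else 0 := by
  rw [integral_circleMeasure]
  split_ifs with h
  · simp only [h, Int.cast_zero, zero_mul, Real.cos_zero, intervalIntegral.integral_const,
      smul_eq_mul]
    field_simp
    norm_num
  · have ha : (a : ℝ) ≠ 0 := by exact_mod_cast h
    rw [intervalIntegral.integral_comp_mul_left (fun x => Real.cos x) ha]
    simp [integral_cos, Real.sin_int_mul_pi]

/-- The characteristic function of one step of the discrete-time walk on `ℤ^m`. -/
def stepCharFun {m : ℕ} (θ : Fin m → ℝ) : ℝ := (∑ i, Real.cos (θ i)) / m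

@[fun_prop]
lemma continuous_stepCharFun {m : ℕ} : Continuous (stepCharFun (m := m)) := by
  unfold stepCharFun
  fun_prop

lemma card_mul_stepCharFun {m : ℕ} (θ : Fin m → ℝ) :
    m * stepCharFun θ = ∑ i, Real.cos (θ i) := by
  obtain rfl | hm := eq_or_ne m 0
  · simp
  · rw [stepCharFun, mul_div_cancel₀ _ (by exact_mod_cast hm)]

lemma abs_stepCharFun_le_one {m : ℕ} (θ : Fin m → ℝ) : |stepCharFun θ| ≤ 1 := by
  rw [stepCharFun, abs_div, Nat.abs_cast]
  refine div_le_one_of_le₀ ?_ m.cast_nonneg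
  calc |∑ i, Real.cos (θ i)| ≤ ∑ i, |Real.cos (θ i)| := Finset.abs_sum_le_sum_abs _ _
    _ ≤ ∑ _i : Fin m, 1 := Finset.sum_le_sum fun i _ => Real.abs_cos_le_one _
    _ = m := by simp

lemma abs_prod_cos_le_one {ι : Type*} (s : Finset ι) (f : ι → ℝ) :
    |∏ j ∈ s, Real.cos (f j)| ≤ 1 := by
  rw [Finset.abs_prod]
  exact Finset.prod_le_one (fun _ _ => abs_nonneg _) fun _ _ => Real.abs_cos_le_one _

lemma abs_stepCharFun_pow_mul_prod_cos_le_one {m : ℕ} (n : ℕ) (θ c : Fin m → ℝ) :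
    |stepCharFun θ ^ n * ∏ j, Real.cos (c j * θ j)| ≤ 1 := by
  rw [abs_mul, abs_pow]
  exact mul_le_one₀ (pow_le_one₀ (abs_nonneg _) (abs_stepCharFun_le_one θ)) (abs_nonneg _)
    (abs_prod_cos_le_one _ _)

lemma prod_cos_update_add_prod_cos_update {m : ℕ} (i : Fin m) (x y : Fin m → ℤ)
    (θ : Fin m → ℝ) :
    (∏ j, Real.cos (((y j - Function.update x i (x i + 1) j : ℤ) : ℝ) * θ j))
      + (∏ j, Real.cos (((y j - Function.update x i (x i - 1) j : ℤ) : ℝ) * θ j))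
      = 2 * Real.cos (θ i) * ∏ j, Real.cos (((y j - x j : ℤ) : ℝ) * θ j) := by
  have split (w : Fin m → ℤ) : ∏ j, Real.cos (((y j - w j : ℤ) : ℝ) * θ j)
      = Real.cos (((y i - w i : ℤ) : ℝ) * θ i)
        * ∏ j ∈ Finset.univ.erase i, Real.cos (((y j - w j : ℤ) : ℝ) * θ j) :=
    (Finset.mul_prod_erase _ _ (Finset.mem_univ i)).symm
  have erase (v : ℤ) : ∏ j ∈ Finset.univ.erase i,
      Real.cos (((y j - Function.update x i v j : ℤ) : ℝ) * θ j)
      = ∏ j ∈ Finset.univ.erase i, Real.cos (((y j - x j : ℤ) : ℝ) * θ j) :=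
    Finset.prod_congr rfl fun j hj => by rw [Function.update_of_ne (Finset.ne_of_mem_erase hj)]
  rw [split, split, split x, erase, erase, ← add_mul, ← mul_assoc, Function.update_self,
    Function.update_self]
  congr 1
  push_cast
  rw [show ((y i : ℝ) - (x i + 1)) * θ i = (y i - x i) * θ i - θ i by ring,
    show ((y i : ℝ) - (x i - 1)) * θ i = (y i - x i) * θ i + θ i by ring,
    Real.cos_sub, Real.cos_add]
  ring

lemma integrable_stepCharFun_pow_mul_prod_cos {m : ℕ} (n : ℕ) (c : Fin m → ℝ) :
    Integrable (fun θ : Fin m → ℝ => stepCharFun θ ^ n * ∏ j, Real.cos (c j * θ j))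
      (Measure.pi fun _ => circleMeasure) :=
  .of_bound (C := 1) (Continuous.aestronglyMeasurable (by fun_prop))
    (ae_of_all _ fun θ => abs_stepCharFun_pow_mul_prod_cos_le_one n θ c)

lemma srwKernel_eq_integral {m : ℕ} (n : ℕ) (x y : Fin m → ℤ) :
    srwKernel m n x y = ∫ θ : Fin m → ℝ, stepCharFun θ ^ n
      * ∏ j, Real.cos (((y j - x j : ℤ) : ℝ) * θ j) ∂(Measure.pi fun _ => circleMeasure) := by
  induction n generalizing x with
  | zero =>
    simp only [srwKernel, pow_zero, one_mul]
    rw [integral_fintype_prod_eq_prod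
      (f := fun j (s : ℝ) => Real.cos (((y j - x j : ℤ) : ℝ) * s))]
    simp only [integral_cos_circleMeasure, sub_eq_zero]
    split_ifs with h
    · simp [h]
    · obtain ⟨i, hi⟩ := Function.ne_iff.mp h
      exact (Finset.prod_eq_zero (Finset.mem_univ i) (if_neg (Ne.symm hi))).symm
  | succ n ih =>
    have hint := integrable_stepCharFun_pow_mul_prod_cos (m := m) n
    simp only [srwKernel, ih]
    simp_rw [← integral_add (hint _) (hint _)]
    rw [← integral_finsetSum, ← integral_div]
    swap
    · exact fun i _ => (hint _).add (hint _)
    congr 1 with θ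
    simp_rw [← mul_add, prod_cos_update_add_prod_cos_update, ← Finset.mul_sum,
      ← Finset.sum_mul, ← Finset.mul_sum, pow_succ, stepCharFun]
    rw [mul_left_comm, mul_assoc 2, mul_div_mul_left _ _ two_ne_zero]
    ring

/-- The heat kernel of the walk on `ℤ` at displacement `a`, in its Fourier representation. -/
def heatKernelOne (t : ℝ) (a : ℤ) : ℝ :=
  ∫ θ, Real.exp (-(2 * t * (1 - Real.cos θ))) * Real.cos (a * θ) ∂circleMeasure

lemma hasSum_poisson_mul_pow (s c : ℝ) :
    HasSum (fun n : ℕ => Real.exp (-s) * s ^ n / n.factorial * c ^ n)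
      (Real.exp (s * (c - 1))) := by
  have h := (NormedSpace.expSeries_div_hasSum_exp (s * c)).mul_left (Real.exp (-s))
  rw [← Real.exp_eq_exp_ℝ, ← Real.exp_add] at h
  convert h using 1
  · rfl
  · ext n
    rw [mul_pow]
    ring
  · ring_nf

lemma exp_stepCharFun_sub_one {m : ℕ} (t : ℝ) (θ : Fin m → ℝ) :
    Real.exp (2 * m * t * (stepCharFun θ - 1))
      = ∏ i, Real.exp (-(2 * t * (1 - Real.cos (θ i)))) := by
  rw [← Real.exp_sum, Finset.sum_neg_distrib, ← Finset.mul_sum, Finset.sum_sub_distrib,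
    ← card_mul_stepCharFun]
  simp only [Finset.sum_const, Finset.card_univ, Fintype.card_fin, nsmul_eq_mul, mul_one]
  ring_nf

lemma heatKernel_eq_prod {m : ℕ} (t : ℝ) (x y : Fin m → ℤ) :
    heatKernel m t x y = ∏ i, heatKernelOne t (y i - x i) := by
  set s : ℝ := 2 * m * t
  set φ : (Fin m → ℝ) → ℝ := fun θ => ∏ j, Real.cos (((y j - x j : ℤ) : ℝ) * θ j)
  have hsum (θ : Fin m → ℝ) : HasSum (fun n : ℕ => Real.exp (-s) * s ^ n / n.factorial
      * (stepCharFun θ ^ n * φ θ)) (∏ i, (Real.exp (-(2 * t * (1 - Real.cos (θ i))))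
        * Real.cos (((y i - x i : ℤ) : ℝ) * θ i))) := by
    rw [Finset.prod_mul_distrib, ← exp_stepCharFun_sub_one]
    change HasSum _ (Real.exp (s * _) * φ θ)
    simpa only [mul_assoc] using (hasSum_poisson_mul_pow s (stepCharFun θ)).mul_right (φ θ)
  have hdom : Summable fun n : ℕ => Real.exp (-s) * |s| ^ n / n.factorial := by
    simp_rw [mul_div_assoc]
    exact (Real.summable_pow_div_factorial _).mul_left _
  have key := hasSum_integral_of_dominated_convergence
    (μ := Measure.pi fun _ : Fin m => circleMeasure)
    (F := fun (n : ℕ) θ => Real.exp (-s) * s ^ n / n.factorial * (stepCharFun θ ^ n * φ θ))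
    (bound := fun n _ => Real.exp (-s) * |s| ^ n / n.factorial)
    (fun n => Continuous.aestronglyMeasurable (by fun_prop))
    (fun n => ae_of_all _ fun θ => by
      rw [Real.norm_eq_abs, abs_mul, abs_div, abs_mul, abs_pow, Real.abs_exp, Nat.abs_cast]
      exact mul_le_of_le_one_right (by positivity)
        (abs_stepCharFun_pow_mul_prod_cos_le_one n θ _))
    (ae_of_all _ fun _ => hdom) (by simp) (ae_of_all _ hsum)
  have hfubini := integral_fintype_prod_eq_prod (μ := fun _ : Fin m => circleMeasure)
    (f := fun i (θ : ℝ) => Real.exp (-(2 * t * (1 - Real.cos θ)))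
      * Real.cos (((y i - x i : ℤ) : ℝ) * θ))
  rw [hfubini] at key
  simp_rw [heatKernel, srwKernel_eq_integral, neg_mul, ← integral_const_mul]
  exact key.tsum_eq

lemma srwKernel_nonneg {m : ℕ} (n : ℕ) (x y : Fin m → ℤ) : 0 ≤ srwKernel m n x y := by
  induction n generalizing x with
  | zero => simp only [srwKernel]; split_ifs <;> norm_num
  | succ n ih =>
    exact div_nonneg (Finset.sum_nonneg fun i _ => add_nonneg (ih _) (ih _)) (by positivity)

lemma hasSum_srwKernel {m : ℕ} (hm : m ≠ 0) (n : ℕ) (x : Fin m → ℤ) :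
    HasSum (srwKernel m n x) 1 := by
  have hm' : (m : ℝ) ≠ 0 := by exact_mod_cast hm
  induction n generalizing x with
  | zero =>
    change HasSum (fun y => if x = y then (1 : ℝ) else 0) 1
    simpa only [eq_comm] using hasSum_ite_eq x (1 : ℝ)
  | succ n ih =>
    have hstep := (hasSum_sum fun i (_ : i ∈ Finset.univ) =>
      (ih (Function.update x i (x i + 1))).add (ih (Function.update x i (x i - 1)))).div_const
        (2 * (m : ℝ))
    have hmass : (∑ _i : Fin m, ((1 : ℝ) + 1)) / (2 * m) = 1 := by
      rw [Finset.sum_const, Finset.card_univ, Fintype.card_fin, nsmul_eq_mul]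
      field_simp
      norm_num
    rwa [hmass] at hstep

lemma heatKernel_nonneg {m : ℕ} {t : ℝ} (ht : 0 ≤ t) (x y : Fin m → ℤ) :
    0 ≤ heatKernel m t x y := by
  refine tsum_nonneg fun n => mul_nonneg ?_ (srwKernel_nonneg n x y)
  positivity

lemma srwKernel_le_one {m : ℕ} (n : ℕ) (x y : Fin m → ℤ) : srwKernel m n x y ≤ 1 := by
  rw [srwKernel_eq_integral]
  refine (Real.le_norm_self _).trans ((norm_integral_le_of_norm_le_const (C := 1) ?_).trans_eq ?_)
  · exact ae_of_all _ fun θ => abs_stepCharFun_pow_mul_prod_cos_le_one n θ _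
  · simp

lemma tsum_ofReal_heatKernel (m : ℕ) {t : ℝ} (ht : 0 ≤ t) (x : Fin m → ℤ) :
    ∑' y, ENNReal.ofReal (heatKernel m t x y) = 1 := by
  obtain rfl | hm := eq_or_ne m 0
  · simp [heatKernel_eq_prod]
  set p : ℕ → ℝ := fun n => Real.exp (-(2 * m) * t) * ((2 * m) * t) ^ n / n.factorial
  have hp (n : ℕ) : 0 ≤ p n := by positivity
  have hpsum : HasSum p 1 := by
    simpa [p, neg_mul] using hasSum_poisson_mul_pow (2 * m * t) 1
  have hmix (y : Fin m → ℤ) : ENNReal.ofReal (heatKernel m t x y)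
      = ∑' n, ENNReal.ofReal (p n) * ENNReal.ofReal (srwKernel m n x y) := by
    simp_rw [← ENNReal.ofReal_mul (hp _)]
    refine ENNReal.ofReal_tsum_of_nonneg (fun n => mul_nonneg (hp n) (srwKernel_nonneg n x y)) ?_
    exact hpsum.summable.of_nonneg_of_le (fun n => mul_nonneg (hp n) (srwKernel_nonneg n x y))
      fun n => mul_le_of_le_one_right (hp n) (srwKernel_le_one n x y)
  have hstep (n : ℕ) : ∑' y, ENNReal.ofReal (srwKernel m n x y) = 1 := by
    rw [← ENNReal.ofReal_tsum_of_nonneg (srwKernel_nonneg n x) (hasSum_srwKernel hm n x).summable,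
      (hasSum_srwKernel hm n x).tsum_eq, ENNReal.ofReal_one]
  simp_rw [hmix]
  rw [ENNReal.tsum_comm]
  simp_rw [ENNReal.tsum_mul_left, hstep, mul_one]
  rw [← ENNReal.ofReal_tsum_of_nonneg hp hpsum.summable, hpsum.tsum_eq, ENNReal.ofReal_one]

/-! ### Return probability of the walk on `ℤ` -/

/-- The probability that the walk on `ℤ` is back at its starting point at time `t`. -/
def returnProb (t : ℝ) : ℝ := heatKernelOne t 0

lemma returnProb_eq_integral (t : ℝ) :
    returnProb t = ∫ θ, Real.exp (-(2 * t * (1 - Real.cos θ))) ∂circleMeasure := by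
  simp [returnProb, heatKernelOne]

lemma heatKernel_self (m : ℕ) (t : ℝ) (x : Fin m → ℤ) : heatKernel m t x x = returnProb t ^ m := by
  simp [heatKernel_eq_prod, returnProb]

lemma returnProb_nonneg (t : ℝ) : 0 ≤ returnProb t := by
  rw [returnProb_eq_integral]
  exact integral_nonneg fun _ => (Real.exp_pos _).le

lemma norm_exp_neg_mul_one_sub_cos_le {t : ℝ} (ht : 0 ≤ t) (θ : ℝ) :
    ‖Real.exp (-(2 * t * (1 - Real.cos θ)))‖ ≤ 1 := by
  rw [Real.norm_eq_abs, Real.abs_exp, Real.exp_le_one_iff, neg_nonpos]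
  exact mul_nonneg (by positivity) (sub_nonneg.2 (Real.cos_le_one θ))

lemma integrable_exp_neg_mul_one_sub_cos {t : ℝ} (ht : 0 ≤ t) :
    Integrable (fun θ => Real.exp (-(2 * t * (1 - Real.cos θ)))) circleMeasure :=
  .of_bound (C := 1) (by fun_prop) (ae_of_all _ (norm_exp_neg_mul_one_sub_cos_le ht))

lemma antitoneOn_returnProb : AntitoneOn returnProb (Ici 0) := by
  intro s hs t ht hst
  simp_rw [returnProb_eq_integral]
  refine integral_mono (integrable_exp_neg_mul_one_sub_cos ht)
    (integrable_exp_neg_mul_one_sub_cos hs) fun θ => Real.exp_le_exp.2 (neg_le_neg ?_)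
  exact mul_le_mul_of_nonneg_right (by gcongr) (sub_nonneg.2 (Real.cos_le_one θ))

lemma one_sub_two_mul_le_returnProb {t : ℝ} (ht : 0 ≤ t) : 1 - 2 * t ≤ returnProb t := by
  have hcos : ∫ θ, Real.cos θ ∂circleMeasure = 0 := by
    simpa using integral_cos_circleMeasure 1
  have hint : Integrable (fun θ => 2 * t * Real.cos θ) circleMeasure :=
    .const_mul (.of_bound (C := 1) (by fun_prop) (ae_of_all _ Real.abs_cos_le_one)) _
  calc 1 - 2 * t = ∫ θ, (1 - 2 * t + 2 * t * Real.cos θ) ∂circleMeasure := by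
        rw [integral_add (integrable_const _) hint, integral_const_mul, hcos]
        simp
    _ ≤ returnProb t := by
        rw [returnProb_eq_integral]
        exact integral_mono ((integrable_const _).add hint) (integrable_exp_neg_mul_one_sub_cos ht)
          fun θ => by linarith [Real.add_one_le_exp (-(2 * t * (1 - Real.cos θ)))]

lemma returnProb_zero : returnProb 0 = 1 := by simp [returnProb_eq_integral]

lemma returnProb_le_one {t : ℝ} (ht : 0 ≤ t) : returnProb t ≤ 1 :=
  returnProb_zero ▸ antitoneOn_returnProb self_mem_Ici ht ht

lemma measurable_returnProb : Measurable returnProb := by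
  have h : Measurable fun p : ℝ × ℝ => Real.exp (-(2 * p.1 * (1 - Real.cos p.2))) := by fun_prop
  rw [funext returnProb_eq_integral]
  exact h.stronglyMeasurable.integral_prod_right'.measurable

/-- The right-hand side is a Gaussian integral, hence of order `t ^ (-1/2)`. -/
lemma returnProb_le_integral_gaussian {t : ℝ} (ht : 0 ≤ t) :
    returnProb t ≤ (2 * Real.pi)⁻¹
      * ∫ θ in (-Real.pi)..Real.pi, Real.exp (-(4 / Real.pi ^ 2 * t) * θ ^ 2) := by
  rw [returnProb_eq_integral, integral_circleMeasure]
  gcongr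
  refine intervalIntegral.integral_mono_on (by linarith [Real.pi_pos])
    (Continuous.intervalIntegrable (by fun_prop) _ _)
    (Continuous.intervalIntegrable (by fun_prop) _ _) fun θ hθ => Real.exp_le_exp.2 ?_
  have h := mul_le_mul_of_nonneg_left
    (Real.cos_le_one_sub_mul_cos_sq (x := θ) (abs_le.mpr hθ)) (mul_nonneg zero_le_two ht)
  linear_combination h

lemma exists_returnProb_le : ∃ C > 0, ∀ t : ℝ, 0 < t → returnProb t ≤ C / √t := by
  refine ⟨(2 * Real.pi)⁻¹ * √(Real.pi * (Real.pi ^ 2 / 4)), by positivity, fun t ht => ?_⟩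
  refine (returnProb_le_integral_gaussian ht.le).trans ?_
  rw [mul_div_assoc, intervalIntegral.integral_of_le (by linarith [Real.pi_pos])]
  gcongr
  calc ∫ θ in Ioc (-Real.pi) Real.pi, Real.exp (-(4 / Real.pi ^ 2 * t) * θ ^ 2)
      ≤ ∫ θ, Real.exp (-(4 / Real.pi ^ 2 * t) * θ ^ 2) :=
        setIntegral_le_integral (integrable_exp_neg_mul_sq (by positivity))
          (ae_of_all _ fun _ => (Real.exp_pos _).le)
    _ = √(Real.pi * (Real.pi ^ 2 / 4)) / √t := by
        rw [integral_gaussian, ← Real.sqrt_div (by positivity)]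
        congr 1
        field_simp

lemma exists_le_returnProb : ∃ c > 0, ∀ t : ℝ, 1 ≤ t → c / √t ≤ returnProb t := by
  refine ⟨(2 * Real.pi)⁻¹ * Real.exp (-1), by positivity, fun t ht => ?_⟩
  have ht0 : 0 < t := by linarith
  set r := (√t)⁻¹
  have hr0 : 0 < r := by positivity
  have hr1 : r ≤ 1 := inv_le_one_of_one_le₀ (Real.one_le_sqrt.2 ht)
  have hr2 : r ^ 2 = t⁻¹ := by rw [inv_pow, Real.sq_sqrt ht0.le]
  have hint (a b : ℝ) : IntervalIntegrable
      (fun θ => Real.exp (-(2 * t * (1 - Real.cos θ)))) volume a b :=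
    Continuous.intervalIntegrable (by fun_prop) _ _
  have hexp (θ : ℝ) (hθ : θ ∈ Icc 0 r) :
      Real.exp (-1) ≤ Real.exp (-(2 * t * (1 - Real.cos θ))) := by
    have hθ2 : θ ^ 2 ≤ t⁻¹ := hr2 ▸ pow_le_pow_left₀ hθ.1 hθ.2 2
    have h : t * (2 * (1 - Real.cos θ)) ≤ t * t⁻¹ := by
      gcongr
      linarith [Real.one_sub_sq_div_two_le_cos (x := θ)]
    rw [mul_inv_cancel₀ ht0.ne'] at h
    exact Real.exp_le_exp.2 (by linarith)
  rw [returnProb_eq_integral, integral_circleMeasure, mul_div_assoc]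
  gcongr
  calc Real.exp (-1) / √t = ∫ _θ in (0 : ℝ)..r, Real.exp (-1) := by
        simp [r, div_eq_mul_inv, mul_comm]
    _ ≤ ∫ θ in (0 : ℝ)..r, Real.exp (-(2 * t * (1 - Real.cos θ))) :=
        intervalIntegral.integral_mono_on hr0.le (by simp) (hint _ _) hexp
    _ ≤ ∫ θ in (-Real.pi)..Real.pi, Real.exp (-(2 * t * (1 - Real.cos θ))) :=
        intervalIntegral.integral_mono_interval (by linarith [Real.pi_pos]) hr0.le
          (by linarith [Real.pi_gt_three]) (ae_of_all _ fun _ => (Real.exp_pos _).le) (hint _ _)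

/-! ### Finite-dimensional distributions -/

lemma measure_eq_tsum_inter_fiber {Ω β : Type*} [MeasurableSpace Ω] [MeasurableSpace β]
    [Countable β] [MeasurableSingletonClass β] {μ : Measure Ω} {Y : Ω → β} (hY : Measurable Y)
    (A : Set Ω) : μ A = ∑' b, μ (A ∩ {ω | Y ω = b}) := by
  have hfiber (b : β) : MeasurableSet (Y ⁻¹' {b}) := hY (measurableSet_singleton b)
  have h := tsum_measure_preimage_singleton (μ := μ.restrict A) countable_univ
    (fun b _ => hfiber b)
  rw [preimage_univ, Measure.restrict_apply_univ, tsum_univ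
    (f := fun b => μ.restrict A (Y ⁻¹' {b}))] at h
  rw [← h]
  exact tsum_congr fun b => by rw [Measure.restrict_apply (hfiber b), inter_comm]; rfl

lemma indepFun_of_measure_fiber_inter_eq_mul {Ω α β : Type*} [MeasurableSpace Ω]
    {P : Measure Ω} [IsProbabilityMeasure P] [Countable α] [Countable β] [MeasurableSpace α]
    [MeasurableSpace β] [MeasurableSingletonClass α] [MeasurableSingletonClass β]
    {X : Ω → α} {Y : Ω → β} (hX : Measurable X) (hY : Measurable Y)
    (h : ∀ a b, P ({ω | X ω = a} ∩ {ω | Y ω = b}) = P {ω | X ω = a} * P {ω | Y ω = b}) :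
    IndepFun X Y P := by
  rw [indepFun_iff_map_prod_eq_prod_map_map hX.aemeasurable hY.aemeasurable]
  refine Measure.ext_of_singleton fun ⟨a, b⟩ => ?_
  rw [Measure.map_apply (hX.prodMk hY) (measurableSet_singleton _), ← singleton_prod_singleton,
    Measure.prod_prod, Measure.map_apply hX (measurableSet_singleton a),
    Measure.map_apply hY (measurableSet_singleton b)]
  exact h a b

/-- The probability that the walk on `ℤ^m` started at `x` visits `y 0, …, y n` at the times
`t 0 ≤ … ≤ t n`. -/
def pathProb (m : ℕ) {n : ℕ} (x : Fin m → ℤ) (t : Fin (n + 1) → ℝ)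
    (y : Fin (n + 1) → Fin m → ℤ) : ℝ≥0∞ :=
  ENNReal.ofReal (heatKernel m (t 0) x (y 0)) * ∏ i : Fin n,
    ENNReal.ofReal (heatKernel m (t i.succ - t i.castSucc) (y i.castSucc) (y i.succ))

lemma pathProb_cons (m : ℕ) {n : ℕ} (x : Fin m → ℤ) (t : Fin (n + 2) → ℝ) (y₀ : Fin m → ℤ)
    (y : Fin (n + 1) → Fin m → ℤ) :
    pathProb m x t (Fin.cons y₀ y : Fin (n + 2) → Fin m → ℤ)
      = ENNReal.ofReal (heatKernel m (t 0) x y₀)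
        * pathProb m y₀ (fun i => t i.succ - t 0) y := by
  simp only [pathProb, Fin.prod_univ_succ, Fin.cons_zero, Fin.cons_succ, Fin.castSucc_zero,
    ← Fin.succ_castSucc, sub_sub_sub_cancel_right]

lemma tsum_pathProb (m : ℕ) {n : ℕ} (x : Fin m → ℤ) {t : Fin (n + 1) → ℝ} (h0 : 0 ≤ t 0)
    (ht : Monotone t) : ∑' y, pathProb m x t y = 1 := by
  induction n generalizing x with
  | zero =>
    rw [← (Equiv.funUnique (Fin 1) (Fin m → ℤ)).symm.tsum_eq, ← tsum_ofReal_heatKernel m h0 x]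
    exact tsum_congr fun y => by simp [pathProb]
  | succ n ih =>
    rw [← (Fin.consEquiv fun _ => Fin m → ℤ).tsum_eq,
      ENNReal.tsum_prod (f := fun a b => pathProb m x t (Fin.consEquiv _ (a, b)))]
    simp only [Fin.consEquiv, Equiv.coe_fn_mk, pathProb_cons, ENNReal.tsum_mul_left]
    have hrest (y₀ : Fin m → ℤ) : ∑' y, pathProb m y₀ (fun i : Fin (n + 1) => t i.succ - t 0) y
        = 1 :=
      ih y₀ (sub_nonneg.2 (ht (Fin.zero_le _)))
        fun i j hij => sub_le_sub_right (ht (Fin.succ_le_succ_iff.2 hij)) _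
    simp only [hrest, mul_one, tsum_ofReal_heatKernel m h0]

lemma heatKernel_succ {m : ℕ} (t : ℝ) (x y : Fin (m + 1) → ℤ) :
    heatKernel (m + 1) t x y = heatKernel 1 t (fun _ => x 0) (fun _ => y 0)
      * heatKernel m t (Fin.tail x) (Fin.tail y) := by
  simp [heatKernel_eq_prod, Fin.prod_univ_succ, Fin.tail]

lemma pathProb_succ {m n : ℕ} (x : Fin (m + 1) → ℤ) {t : Fin (n + 1) → ℝ} (h0 : 0 ≤ t 0)
    (ht : Monotone t) (y : Fin (n + 1) → Fin (m + 1) → ℤ) :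
    pathProb (m + 1) x t y = pathProb 1 (fun _ => x 0) t (fun i _ => y i 0)
      * pathProb m (Fin.tail x) t (fun i => Fin.tail (y i)) := by
  have hinc (i : Fin n) : 0 ≤ t i.succ - t i.castSucc :=
    sub_nonneg.2 (ht (Fin.castSucc_lt_succ).le)
  simp only [pathProb]
  rw [heatKernel_succ, ENNReal.ofReal_mul (heatKernel_nonneg h0 _ _), mul_mul_mul_comm,
    ← Finset.prod_mul_distrib]
  congr 1
  exact Finset.prod_congr rfl fun i _ => by
    rw [heatKernel_succ, ENNReal.ofReal_mul (heatKernel_nonneg (hinc i) _ _)]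

namespace IsCTSRW

section
variable {m : ℕ} {Ω : Type*} [MeasurableSpace Ω] {P : (Fin m → ℤ) → Measure Ω}
  {S : ℝ → Ω → (Fin m → ℤ)}

lemma measurable_apply (hS : IsCTSRW m P S) (u : ℝ) : Measurable (S u) :=
  hS.meas.comp (measurable_const.prodMk measurable_id)

lemma measure_path (hS : IsCTSRW m P S) (x : Fin m → ℤ) {n : ℕ} {t : Fin (n + 1) → ℝ}
    (h0 : 0 ≤ t 0) (ht : Monotone t) (y : Fin (n + 1) → Fin m → ℤ) :
    P x {ω | ∀ i, S (t i) ω = y i} = pathProb m x t y := by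
  have := hS.prob x
  have hinc (i : Fin n) : t i.castSucc ≤ t i.succ := ht (Fin.castSucc_lt_succ).le
  rw [← ENNReal.ofReal_toReal (measure_ne_top (P x) _), hS.fdd x n t h0 hinc y,
    ENNReal.ofReal_mul (heatKernel_nonneg h0 _ _), ENNReal.ofReal_prod_of_nonneg
      fun i _ => heatKernel_nonneg (sub_nonneg.2 (hinc i)) _ _]
  rfl

lemma measure_eq (hS : IsCTSRW m P S) (x : Fin m → ℤ) {t : ℝ} (ht : 0 ≤ t) (y : Fin m → ℤ) :
    P x {ω | S t ω = y} = ENNReal.ofReal (heatKernel m t x y) := by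
  simpa [pathProb] using
    hS.measure_path x (n := 0) (t := fun _ => t) ht monotone_const fun _ => y

/-- Summing the path probabilities over the common value, every increment of the path
returns to its starting point. -/
lemma measure_forall_eq (hS : IsCTSRW m P S) (x : Fin m → ℤ) {n : ℕ} {t : Fin (n + 1) → ℝ}
    (h0 : 0 ≤ t 0) (ht : Monotone t) :
    P x {ω | ∀ i, S (t i) ω = S (t 0) ω}
      = ∏ i : Fin n, ENNReal.ofReal (returnProb (t i.succ - t i.castSucc) ^ m) := by
  rw [measure_eq_tsum_inter_fiber (hS.measurable_apply (t 0))]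
  have hfiber (y : Fin m → ℤ) :
      P x ({ω | ∀ i, S (t i) ω = S (t 0) ω} ∩ {ω | S (t 0) ω = y})
        = ENNReal.ofReal (heatKernel m (t 0) x y)
          * ∏ i : Fin n, ENNReal.ofReal (returnProb (t i.succ - t i.castSucc) ^ m) := by
    simp_rw [← heatKernel_self m _ y]
    refine Eq.trans ?_ (hS.measure_path x h0 ht fun _ => y)
    congr 1
    ext ω
    exact ⟨fun h i => (h.1 i).trans h.2, fun h => ⟨fun i => (h i).trans (h 0).symm, h 0⟩⟩
  simp_rw [hfiber, ENNReal.tsum_mul_right, tsum_ofReal_heatKernel m h0, one_mul]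

end

section
variable {d : ℕ} {Ω : Type*} [MeasurableSpace Ω] {P : (Fin (d + 1) → ℤ) → Measure Ω}
  {S : ℝ → Ω → (Fin (d + 1) → ℤ)}

lemma measurable_head (hS : IsCTSRW (d + 1) P S) (u : ℝ) : Measurable fun ω => S u ω 0 :=
  (measurable_pi_apply 0).comp (hS.measurable_apply u)

lemma measurable_tail (hS : IsCTSRW (d + 1) P S) (u : ℝ) :
    Measurable fun ω => Fin.tail (S u ω) :=
  measurable_pi_lambda _ fun i => (measurable_pi_apply i.succ).comp (hS.measurable_apply u)

lemma measure_head_inter_tail (hS : IsCTSRW (d + 1) P S) (x : Fin (d + 1) → ℤ) {n : ℕ}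
    {t : Fin (n + 1) → ℝ} (h0 : 0 ≤ t 0) (ht : Monotone t) (a : Fin (n + 1) → ℤ)
    (y : Fin (n + 1) → Fin d → ℤ) :
    P x ({ω | (fun i => S (t i) ω 0) = a} ∩ {ω | (fun i => Fin.tail (S (t i) ω)) = y})
      = pathProb 1 (fun _ => x 0) t (fun i _ => a i) * pathProb d (Fin.tail x) t y := by
  have hpath := hS.measure_path x h0 ht fun i => Fin.cons (a i) (y i)
  simp only [pathProb_succ x h0 ht, Fin.cons_zero, Fin.tail_cons] at hpath
  rw [← hpath]
  congr 1
  ext ω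
  simp only [mem_inter_iff, mem_ofPred_eq, funext_iff (f := fun i => S (t i) ω 0),
    funext_iff (f := fun i => Fin.tail (S (t i) ω)), ← forall_and]
  refine forall_congr' fun i => ⟨fun h => ?_, fun h => ?_⟩
  · rw [← h.1, ← h.2, Fin.cons_self_tail]
  · rw [h, Fin.cons_zero, Fin.tail_cons]
    exact ⟨rfl, rfl⟩

lemma measure_tail_path (hS : IsCTSRW (d + 1) P S) (x : Fin (d + 1) → ℤ) {n : ℕ}
    {t : Fin (n + 1) → ℝ} (h0 : 0 ≤ t 0) (ht : Monotone t) (y : Fin (n + 1) → Fin d → ℤ) :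
    P x {ω | (fun i => Fin.tail (S (t i) ω)) = y} = pathProb d (Fin.tail x) t y := by
  rw [measure_eq_tsum_inter_fiber (measurable_pi_lambda _ fun i => hS.measurable_head (t i))]
  simp_rw [inter_comm _ {ω | (fun i => S (t i) ω 0) = _}, hS.measure_head_inter_tail x h0 ht,
    ENNReal.tsum_mul_right]
  have hmass : ∑' a : Fin (n + 1) → ℤ, pathProb 1 (fun _ => x 0) t (fun i _ => a i) = 1 := by
    rw [← tsum_pathProb 1 (fun _ => x 0) h0 ht, ← ((Equiv.refl (Fin (n + 1))).arrowCongr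
      (Equiv.funUnique (Fin 1) ℤ)).symm.tsum_eq]
    rfl
  rw [hmass, one_mul]

lemma measure_head_path (hS : IsCTSRW (d + 1) P S) (x : Fin (d + 1) → ℤ) {n : ℕ}
    {t : Fin (n + 1) → ℝ} (h0 : 0 ≤ t 0) (ht : Monotone t) (a : Fin (n + 1) → ℤ) :
    P x {ω | (fun i => S (t i) ω 0) = a} = pathProb 1 (fun _ => x 0) t (fun i _ => a i) := by
  rw [measure_eq_tsum_inter_fiber (measurable_pi_lambda _ fun i => hS.measurable_tail (t i))]
  simp_rw [hS.measure_head_inter_tail x h0 ht, ENNReal.tsum_mul_left, tsum_pathProb d _ h0 ht,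
    mul_one]

lemma measure_head_eq (hS : IsCTSRW (d + 1) P S) (x : Fin (d + 1) → ℤ) {t : ℝ} (ht : 0 ≤ t) :
    P x {ω | S t ω 0 = x 0} = ENNReal.ofReal (returnProb t) := by
  have h := hS.measure_head_path x (n := 0) (t := fun _ => t) ht monotone_const fun _ => x 0
  simpa [pathProb, heatKernel_self, funext_iff] using h

protected lemma tail (hS : IsCTSRW (d + 1) P S) :
    IsCTSRW d (fun x => P (Fin.cons 0 x)) fun u ω => Fin.tail (S u ω) where
  prob x := hS.prob _
  meas := measurable_pi_lambda _ fun i => (measurable_pi_apply i.succ).comp hS.meas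
  start x := by
    filter_upwards [hS.start (Fin.cons 0 x)] with ω hω
    rw [hω, Fin.tail_cons]
  rightCont x := by
    filter_upwards [hS.rightCont (Fin.cons 0 x)] with ω hω t ht
    obtain ⟨ε, hε, h⟩ := hω t ht
    exact ⟨ε, hε, fun u h1 h2 => congrArg Fin.tail (h u h1 h2)⟩
  fdd x n t h0 ht y := by
    have h := hS.measure_tail_path (Fin.cons 0 x) h0 (Fin.monotone_iff_le_succ.2 ht) y
    simp only [funext_iff (f := fun i => Fin.tail (S (t i) _)), Fin.tail_cons] at h
    rw [h, pathProb, ENNReal.toReal_mul, ENNReal.toReal_prod,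
      ENNReal.toReal_ofReal (heatKernel_nonneg h0 _ _)]
    congr 1
    exact Finset.prod_congr rfl fun i _ =>
      ENNReal.toReal_ofReal (heatKernel_nonneg (sub_nonneg.2 (ht i)) _ _)

lemma indepFun_head_tail_path (hS : IsCTSRW (d + 1) P S) (x : Fin (d + 1) → ℤ) {n : ℕ}
    {t : Fin (n + 1) → ℝ} (h0 : 0 ≤ t 0) (ht : Monotone t) :
    IndepFun (fun ω i => S (t i) ω 0) (fun ω i => Fin.tail (S (t i) ω)) (P x) := by
  have := hS.prob x
  refine indepFun_of_measure_fiber_inter_eq_mul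
    (measurable_pi_lambda _ fun i => hS.measurable_head (t i))
    (measurable_pi_lambda _ fun i => hS.measurable_tail (t i)) fun a y => ?_
  rw [hS.measure_head_inter_tail x h0 ht, hS.measure_head_path x h0 ht,
    hS.measure_tail_path x h0 ht]

lemma indepFun_head_tail (hS : IsCTSRW (d + 1) P S) (x : Fin (d + 1) → ℤ) (s : ℝ≥0) :
    IndepFun (fun ω => S s ω 0) (fun ω (u : ℝ≥0) => Fin.tail (S u ω)) (P x) := by
  classical
  have := hS.prob x
  refine IndepFun.indepFun_process (hS.measurable_head s) (fun u => hS.measurable_tail u)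
    fun I => ?_
  obtain ⟨n, hn⟩ : ∃ n, (insert s I).card = n + 1 :=
    Nat.exists_eq_add_one.2 (Finset.card_pos.2 (Finset.insert_nonempty s I))
  let e := (insert s I).orderEmbOfFin hn
  have he (u : ℝ≥0) (hu : u ∈ insert s I) : ∃ i, e i = u := by
    rwa [← mem_range, Finset.range_orderEmbOfFin, Finset.mem_coe]
  obtain ⟨k, hk⟩ := he s (Finset.mem_insert_self _ _)
  choose idx hidx using fun u : I => he u (Finset.mem_insert_of_mem u.2)
  have hind := (hS.indepFun_head_tail_path x (t := fun i => (e i : ℝ)) (e 0).2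
    (NNReal.coe_mono.comp e.monotone)).comp (measurable_pi_apply k)
    (measurable_pi_lambda (fun y (u : I) => y (idx u)) fun u => measurable_pi_apply (idx u))
  simpa only [Function.comp_def, hk, hidx] using hind

end

end IsCTSRW

/-! ### Approximating times from the right -/

/-- The first multiple of `1 / (n + 1)` strictly to the right of `u`. Right-continuous paths are
recovered from their values at these times. -/
def upperGrid (n : ℕ) (u : ℝ) : ℝ := (⌊((n : ℝ) + 1) * u⌋₊ + 1) / ((n : ℝ) + 1)

lemma measurable_upperGrid (n : ℕ) : Measurable (upperGrid n) :=
  ((measurable_from_nat (f := fun k : ℕ => (k : ℝ))).comp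
    (Nat.measurable_floor.comp (measurable_id.const_mul _))).add_const 1 |>.div_const _

lemma upperGrid_nonneg (n : ℕ) (u : ℝ) : 0 ≤ upperGrid n u := by unfold upperGrid; positivity

lemma lt_upperGrid (n : ℕ) (u : ℝ) : u < upperGrid n u := by
  rw [upperGrid, lt_div_iff₀ (by positivity), mul_comm]
  exact Nat.lt_floor_add_one _

lemma upperGrid_le (n : ℕ) {u : ℝ} (hu : 0 ≤ u) : upperGrid n u ≤ u + 1 / ((n : ℝ) + 1) := by
  rw [upperGrid, add_div]
  gcongr
  exact div_le_of_le_mul₀ (by positivity) hu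
    ((Nat.floor_le (by positivity)).trans_eq (mul_comm _ _))

lemma tendsto_upperGrid {u : ℝ} (hu : 0 ≤ u) :
    Tendsto (fun n => upperGrid n u) atTop (𝓝 u) := by
  refine tendsto_of_tendsto_of_tendsto_of_le_of_le tendsto_const_nhds ?_
    (fun n => (lt_upperGrid n u).le) (fun n => upperGrid_le n hu)
  simpa using tendsto_const_nhds (x := u).add (tendsto_one_div_add_atTop_nhds_zero_nat (𝕜 := ℝ))

lemma eventually_apply_upperGrid_eq {E : Type*} {w : ℝ → E}
    (hw : ∀ t, 0 ≤ t → ∃ ε > (0 : ℝ), ∀ u, t ≤ u → u < t + ε → w u = w t) {u : ℝ} (hu : 0 ≤ u) :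
    ∀ᶠ n in atTop, w (upperGrid n u) = w u := by
  obtain ⟨ε, hε, h⟩ := hw u hu
  filter_upwards [(tendsto_upperGrid hu).eventually_lt_const (lt_add_of_pos_right u hε)] with n hn
  exact h _ (lt_upperGrid n u).le hn

/-! ### Sampling at an independent random time -/

section

variable {Ω β E : Type*} [MeasurableSpace Ω] [MeasurableSpace β] [MeasurableSpace E]
  {μ : Measure Ω} {Y : Ω → β} {A : Set E} {B : Set β}

lemma measure_sample_nat_inter_preimage {X : ℕ → Ω → E} (hY : Measurable Y)
    (hXY : ∀ k, IndepFun (X k) Y μ) {J : β → ℕ} (hJ : Measurable J) (hA : MeasurableSet A)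
    (hB : MeasurableSet B) :
    μ ({ω | X (J (Y ω)) ω ∈ A} ∩ Y ⁻¹' B) = ∫⁻ ω in Y ⁻¹' B, μ (X (J (Y ω)) ⁻¹' A) ∂μ := by
  have hJY : Measurable fun ω => J (Y ω) := hJ.comp hY
  rw [← lintegral_map (f := fun k => μ (X k ⁻¹' A)) measurable_from_nat hJY, lintegral_countable',
    measure_eq_tsum_inter_fiber hJY]
  refine tsum_congr fun k => ?_
  have hset : {ω | X (J (Y ω)) ω ∈ A} ∩ Y ⁻¹' B ∩ {ω | J (Y ω) = k}
      = X k ⁻¹' A ∩ Y ⁻¹' (J ⁻¹' {k} ∩ B) := by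
    ext ω
    constructor
    · rintro ⟨⟨hX, hb⟩, rfl⟩
      exact ⟨hX, rfl, hb⟩
    · rintro ⟨hX, rfl, hb⟩
      exact ⟨⟨hX, hb⟩, rfl⟩
  rw [hset, (hXY k).measure_inter_preimage_eq_mul _ _ hA
      ((hJ (measurableSet_singleton k)).inter hB),
    Measure.map_apply hJY (measurableSet_singleton k),
    Measure.restrict_apply (hJY (measurableSet_singleton k))]
  rfl

/-- Freezing lemma: a right-continuous process independent of `Y` is sampled at a `Y`-measurable
time as if that time were deterministic. -/
lemma measure_sample_inter_preimage [IsFiniteMeasure μ] {X : ℝ → Ω → E}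
    (hX : Measurable fun p : ℝ × Ω => X p.1 p.2)
    (hright : ∀ᵐ ω ∂μ, ∀ t, 0 ≤ t → ∃ ε > (0 : ℝ), ∀ u, t ≤ u → u < t + ε → X u ω = X t ω)
    (hY : Measurable Y) (hXY : ∀ s, 0 ≤ s → IndepFun (X s) Y μ) {τ : β → ℝ} (hτ : Measurable τ)
    (hτ0 : ∀ b, 0 ≤ τ b) (hA : MeasurableSet A) (hB : MeasurableSet B) :
    μ ({ω | X (τ (Y ω)) ω ∈ A} ∩ Y ⁻¹' B) = ∫⁻ ω in Y ⁻¹' B, μ (X (τ (Y ω)) ⁻¹' A) ∂μ := by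
  have hmeas : ∀ {σ : Ω → ℝ}, Measurable σ → MeasurableSet {ω | X (σ ω) ω ∈ A} := fun hσ =>
    hX.comp (hσ.prodMk measurable_id) hA
  have hgrid (n : ℕ) : μ ({ω | X (upperGrid n (τ (Y ω))) ω ∈ A} ∩ Y ⁻¹' B)
      = ∫⁻ ω in Y ⁻¹' B, μ (X (upperGrid n (τ (Y ω))) ⁻¹' A) ∂μ :=
    measure_sample_nat_inter_preimage (X := fun k : ℕ => X (((k : ℝ) + 1) / (n + 1))) hY
      (fun k => hXY _ (by positivity)) (J := fun b => ⌊((n : ℝ) + 1) * τ b⌋₊)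
      (Nat.measurable_floor.comp (hτ.const_mul _)) hA hB
  have hlim {σ : Ω → ℝ} (hσ : Measurable σ) (hσ0 : ∀ ω, 0 ≤ σ ω) {C : Set Ω}
      (hC : MeasurableSet C) : Tendsto (fun n => μ ({ω | X (upperGrid n (σ ω)) ω ∈ A} ∩ C)) atTop
        (𝓝 (μ ({ω | X (σ ω) ω ∈ A} ∩ C))) := by
    refine tendsto_measure_of_ae_tendsto_indicator_of_isFiniteMeasure atTop
      ((hmeas hσ).inter hC)
      (fun n => (hmeas ((measurable_upperGrid n).comp hσ)).inter hC) ?_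
    filter_upwards [hright] with ω hω
    filter_upwards [eventually_apply_upperGrid_eq (w := fun u => X u ω) hω (hσ0 ω)] with n hn
    simp only [mem_inter_iff, mem_ofPred_eq, hn]
  refine tendsto_nhds_unique (hlim (hτ.comp hY) (fun ω => hτ0 _) (hY hB)) ?_
  simp_rw [Function.comp_apply, hgrid]
  refine tendsto_lintegral_of_dominated_convergence (fun _ => μ univ) (fun n => ?_)
    (fun n => ae_of_all _ fun ω => measure_mono (subset_univ _)) ?_ (ae_of_all _ fun ω => ?_)
  · exact measurable_from_nat (f := fun k : ℕ => μ (X (((k : ℝ) + 1) / (n + 1)) ⁻¹' A)) |>.comp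
      (Nat.measurable_floor.comp ((hτ.comp hY).const_mul ((n : ℝ) + 1)))
  · simpa using ENNReal.mul_ne_top (measure_ne_top μ _) (measure_ne_top μ _)
  · simpa using! hlim (measurable_const (a := τ (Y ω))) (fun _ => hτ0 _) MeasurableSet.univ

end

/-! ### The range of the walk in bounded time -/

/-- The number of changes of `w` along the first `N` steps of the grid of mesh `1 / (n + 1)`. -/
def gridJumps {E : Type*} [DecidableEq E] (w : ℝ → E) (n N : ℕ) : ℕ :=
  ∑ k ∈ Finset.range N, if w ((k + 1 : ℕ) / (n + 1)) = w (k / (n + 1)) then 0 else 1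

lemma card_image_range_succ_le {E : Type*} [DecidableEq E] (w : ℕ → E) (N : ℕ) :
    ((Finset.range (N + 1)).image w).card
      ≤ 1 + ∑ k ∈ Finset.range N, if w (k + 1) = w k then 0 else 1 := by
  induction N with
  | zero => simp
  | succ N ih =>
    rw [Finset.range_add_one, Finset.image_insert, Finset.sum_range_succ, ← add_assoc]
    split_ifs with h
    · rwa [Finset.insert_eq_of_mem, add_zero]
      exact h ▸ Finset.mem_image_of_mem w (Finset.self_mem_range_succ N)
    · exact (Finset.card_insert_le _ _).trans (by gcongr)

lemma finite_image_Icc_of_frequently_card_le {E : Type*} [DecidableEq E] {w : ℝ → E}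
    (hw : ∀ t, 0 ≤ t → ∃ ε > (0 : ℝ), ∀ u, t ≤ u → u < t + ε → w u = w t) {T : ℝ} {K : ℕ}
    (hK : ∃ᶠ n : ℕ in atTop, ((Finset.range (⌊((n : ℝ) + 1) * T⌋₊ + 1 + 1)).image
      fun k : ℕ => w (k / (n + 1))).card ≤ K) : (w '' Icc 0 T).Finite := by
  by_contra hinf
  obtain ⟨F, hF, hcard⟩ := Set.Infinite.exists_subset_card_eq hinf (K + 1)
  have hseen : ∀ᶠ n : ℕ in atTop, F ⊆ (Finset.range (⌊((n : ℝ) + 1) * T⌋₊ + 1 + 1)).image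
      fun k : ℕ => w (k / (n + 1)) := by
    refine (F.eventually_all).2 fun y hy => ?_
    obtain ⟨u, hu, rfl⟩ := hF hy
    filter_upwards [eventually_apply_upperGrid_eq hw hu.1] with n hn
    refine Finset.mem_image.2 ⟨⌊((n : ℝ) + 1) * u⌋₊ + 1, Finset.mem_range.2 ?_, ?_⟩
    · have : ⌊((n : ℝ) + 1) * u⌋₊ ≤ ⌊((n : ℝ) + 1) * T⌋₊ := by gcongr; exact hu.2
      lia
    · simpa [upperGrid] using hn
  obtain ⟨n, hle, hsub⟩ := (hK.and_eventually hseen).exists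
  have := Finset.card_le_card hsub
  lia

/-- The additive functional `∫₀ᵗ f(S_u) du`. -/
def additiveFunctional {Ω E : Type*} (S : ℝ → Ω → E) (f : E → ℝ≥0∞) (t : ℝ) (ω : Ω) : ℝ≥0∞ :=
  ∫⁻ u in Ioc 0 t, f (S u ω)

lemma exists_bound_of_finite_image {E : Type*} {f : E → ℝ≥0∞} (hf : ∀ y, f y ≠ ⊤) {w : ℝ → E}
    {s : Set ℝ} (hs : (w '' s).Finite) : ∃ M ≠ ⊤, ∀ u ∈ s, f (w u) ≤ M := by
  refine ⟨∑ y ∈ hs.toFinset, f y, ENNReal.sum_ne_top.2 fun y _ => hf y, fun u hu => ?_⟩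
  exact Finset.single_le_sum (f := f) (fun _ _ => zero_le) (hs.mem_toFinset.2 ⟨u, hu, rfl⟩)

namespace IsCTSRW

section

variable {m : ℕ} {Ω : Type*} [MeasurableSpace Ω] {P : (Fin m → ℤ) → Measure Ω}
  {S : ℝ → Ω → (Fin m → ℤ)}

lemma measure_add_ne_le (hS : IsCTSRW m P S) (x : Fin m → ℤ) {u h : ℝ} (hu : 0 ≤ u) (hh : 0 ≤ h) :
    P x {ω | S (u + h) ω ≠ S u ω} ≤ ENNReal.ofReal (2 * m * h) := by
  have := hS.prob x
  have hreturn : P x {ω | S (u + h) ω = S u ω} = ENNReal.ofReal (returnProb h ^ m) := by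
    have hmono : Monotone ![u, u + h] := Fin.monotone_iff_le_succ.2 (by simpa using hh)
    simpa [Fin.forall_fin_two] using hS.measure_forall_eq x (t := ![u, u + h]) hu hmono
  have hmeas : MeasurableSet {ω | S (u + h) ω = S u ω} :=
    measurableSet_eq_fun (hS.measurable_apply _) (hS.measurable_apply _)
  have hpow : 1 - 2 * m * h ≤ returnProb h ^ m :=
    calc 1 - 2 * m * h = 1 + m * (1 - 2 * h - 1) := by ring
      _ ≤ 1 + m * (returnProb h - 1) := by gcongr; exact one_sub_two_mul_le_returnProb hh
      _ ≤ returnProb h ^ m := one_add_mul_sub_le_pow (by linarith [returnProb_nonneg h]) m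
  rw [← compl_ofPred, measure_compl hmeas (measure_ne_top _ _), measure_univ, hreturn,
    ← ENNReal.ofReal_one, ← ENNReal.ofReal_sub _ (pow_nonneg (returnProb_nonneg h) m)]
  exact ENNReal.ofReal_le_ofReal (by linarith)

lemma measurable_gridJumps (hS : IsCTSRW m P S) (n N : ℕ) :
    Measurable fun ω => gridJumps (fun u => S u ω) n N :=
  Finset.measurable_fun_sum _ fun _ _ => Measurable.ite
    (measurableSet_eq_fun (hS.measurable_apply _) (hS.measurable_apply _)) measurable_const
    measurable_const

lemma lintegral_gridJumps_le (hS : IsCTSRW m P S) (x : Fin m → ℤ) (n N : ℕ) :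
    ∫⁻ ω, gridJumps (fun u => S u ω) n N ∂P x ≤ ENNReal.ofReal (2 * m * (N / (n + 1))) := by
  have hmeas (k : ℕ) : MeasurableSet {ω | S ((k + 1 : ℕ) / (n + 1)) ω ≠ S (k / (n + 1)) ω} :=
    (measurableSet_eq_fun (hS.measurable_apply _) (hS.measurable_apply _)).compl
  have hsum (ω : Ω) : (gridJumps (fun u => S u ω) n N : ℝ≥0∞) = ∑ k ∈ Finset.range N,
      {ω | S ((k + 1 : ℕ) / (n + 1)) ω ≠ S (k / (n + 1)) ω}.indicator 1 ω := by
    rw [gridJumps, Nat.cast_sum]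
    refine Finset.sum_congr rfl fun k _ => ?_
    by_cases h : S ((k + 1 : ℕ) / (n + 1)) ω = S (k / (n + 1)) ω <;>
      simp [h, -Nat.cast_add]
  have hjump (k : ℕ) : P x {ω | S ((k + 1 : ℕ) / (n + 1)) ω ≠ S (k / (n + 1)) ω}
      ≤ ENNReal.ofReal (2 * m * (1 / (n + 1))) := by
    have h := hS.measure_add_ne_le x (u := k / (n + 1)) (h := 1 / (n + 1)) (by positivity)
      (by positivity)
    rwa [← add_div, ← Nat.cast_add_one] at h
  simp_rw [hsum]
  rw [lintegral_finsetSum _ fun k _ => measurable_one.indicator (hmeas k)]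
  simp_rw [lintegral_indicator_one (hmeas _)]
  refine (Finset.sum_le_sum fun k _ => hjump k).trans_eq ?_
  rw [Finset.sum_const, Finset.card_range, ← ENNReal.ofReal_nsmul]
  congr 1
  simp only [nsmul_eq_mul]
  ring

lemma ae_finite_image_Icc (hS : IsCTSRW m P S) (x : Fin m → ℤ) {T : ℝ} (hT : 0 ≤ T) :
    ∀ᵐ ω ∂P x, ((fun u => S u ω) '' Icc 0 T).Finite := by
  set N : ℕ → ℕ := fun n => ⌊((n : ℝ) + 1) * T⌋₊ + 1
  set J : ℕ → Ω → ℝ≥0∞ := fun n ω => gridJumps (fun u => S u ω) n (N n)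
  have hJ (n : ℕ) : Measurable (J n) := measurable_from_nat.comp (hS.measurable_gridJumps n (N n))
  have hmean (n : ℕ) : ∫⁻ ω, J n ω ∂P x ≤ ENNReal.ofReal (2 * m * (T + 1)) := by
    refine (hS.lintegral_gridJumps_le x n (N n)).trans (ENNReal.ofReal_le_ofReal ?_)
    have hN : (N n : ℝ) / (n + 1) ≤ T + 1 / (n + 1) := by
      simpa [upperGrid, N] using upperGrid_le n hT
    gcongr
    exact hN.trans (by gcongr; exact div_le_self zero_le_one (by simp))
  have hliminf : ∫⁻ ω, liminf (fun n => J n ω) atTop ∂P x ≠ ⊤ :=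
    ne_top_of_le_ne_top ENNReal.ofReal_ne_top <| (lintegral_liminf_le hJ).trans <|
      liminf_le_of_le (by isBoundedDefault) fun b hb => hb.exists.choose_spec.trans (hmean _)
  filter_upwards [ae_lt_top (.liminf hJ) hliminf, hS.rightCont x] with ω hω hright
  obtain ⟨K, hK⟩ := ENNReal.exists_nat_gt hω.ne
  refine finite_image_Icc_of_frequently_card_le hright (K := 1 + K) ?_
  refine (frequently_lt_of_liminf_lt (by isBoundedDefault) hK).mono fun n hn => ?_
  exact (card_image_range_succ_le (fun k : ℕ => S (k / (n + 1)) ω) (N n)).trans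
    (by gcongr; exact Nat.cast_le.1 hn.le)

lemma measurable_additiveFunctional_prod (hS : IsCTSRW m P S) {Θ : Type*} [MeasurableSpace Θ]
    {f : Θ → (Fin m → ℤ) → ℝ≥0∞} (hf : ∀ y, Measurable fun θ => f θ y) :
    Measurable fun p : (Θ × ℝ) × Ω => additiveFunctional S (f p.1.1) p.1.2 p.2 := by
  have hf' : Measurable fun p : Θ × (Fin m → ℤ) => f p.1 p.2 :=
    measurable_from_prod_countable_left hf
  have hindicator (p : (Θ × ℝ) × Ω) : additiveFunctional S (f p.1.1) p.1.2 p.2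
      = ∫⁻ u, {q : ((Θ × ℝ) × Ω) × ℝ | 0 < q.2 ∧ q.2 ≤ q.1.1.2}.indicator
        (fun q => f q.1.1.1 (S q.2 q.1.2)) (p, u) := by
    rw [additiveFunctional, ← lintegral_indicator measurableSet_Ioc]
    rfl
  simp_rw [hindicator]
  refine Measurable.lintegral_prod_right' (Measurable.indicator ?_ ?_)
  · exact hf'.comp ((measurable_fst.comp (measurable_fst.comp measurable_fst)).prodMk
      (hS.meas.comp (measurable_snd.prodMk (measurable_snd.comp measurable_fst))))
  · exact (measurableSet_lt measurable_const measurable_snd).inter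
      (measurableSet_le measurable_snd (measurable_snd.comp (measurable_fst.comp measurable_fst)))

lemma measurable_additiveFunctional (hS : IsCTSRW m P S) (f : (Fin m → ℤ) → ℝ≥0∞) (t : ℝ) :
    Measurable (additiveFunctional S f t) :=
  (hS.measurable_additiveFunctional_prod (Θ := Unit) (f := fun _ => f)
    fun _ => measurable_const).comp (measurable_prodMk_left (x := ((), t)))

lemma ae_additiveFunctional_lt_top (hS : IsCTSRW m P S) (x : Fin m → ℤ) {t : ℝ} (ht : 0 ≤ t) :
    ∀ᵐ ω ∂P x, ∀ f : (Fin m → ℤ) → ℝ≥0∞, (∀ y, f y ≠ ⊤) → additiveFunctional S f t ω < ⊤ := by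
  filter_upwards [hS.ae_finite_image_Icc x ht] with ω hω f hf
  obtain ⟨M, hM, hle⟩ := exists_bound_of_finite_image hf hω
  refine (setLIntegral_mono measurable_const fun u hu => hle u (Ioc_subset_Icc_self hu)).trans_lt ?_
  rw [setLIntegral_const]
  exact ENNReal.mul_lt_top hM.lt_top measure_Ioc_lt_top

/-- On paths with finite range, `f` is bounded along the path, so dominated convergence along the
grids exhibits the additive functional as a functional of the path. -/
lemma exists_measurable_additiveFunctional_eq (hS : IsCTSRW m P S) (x : Fin m → ℤ)
    {f : (Fin m → ℤ) → ℝ≥0∞} (hf : ∀ y, f y ≠ ⊤) {t : ℝ} (ht : 0 ≤ t) :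
    ∃ Φ : (ℝ≥0 → Fin m → ℤ) → ℝ≥0∞, Measurable Φ ∧
      ∀ᵐ ω ∂P x, additiveFunctional S f t ω = Φ fun u => S u ω := by
  refine ⟨fun w => limsup (fun n => ∫⁻ u in Ioc 0 t, f (w (upperGrid n u).toNNReal)) atTop,
    Measurable.limsup fun n => ?_, ?_⟩
  · have hcoord : Measurable fun p : (ℝ≥0 → Fin m → ℤ) × ℕ =>
        f (p.1 (((p.2 : ℝ) + 1) / (n + 1)).toNNReal) :=
      Measurable.of_discrete.comp <| measurable_from_prod_countable_left fun k =>
        measurable_pi_apply (((k : ℝ) + 1) / (n + 1)).toNNReal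
    exact (hcoord.comp (measurable_fst.prodMk (Nat.measurable_floor.comp
      (measurable_snd.const_mul ((n : ℝ) + 1))))).lintegral_prod_right'
  · filter_upwards [hS.rightCont x, hS.ae_finite_image_Icc x (add_nonneg ht zero_le_one)]
      with ω hright hω
    obtain ⟨M, hM, hle⟩ := exists_bound_of_finite_image hf hω
    refine (Tendsto.limsup_eq (tendsto_lintegral_filter_of_dominated_convergence (fun _ => M)
      (.of_forall fun n => ?_) (.of_forall fun n => ?_) ?_ ?_)).symm
    · exact (measurable_from_nat (f := fun k : ℕ =>
        f (S (((k : ℝ) + 1) / (n + 1)).toNNReal ω))).comp (Nat.measurable_floor.comp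
          (measurable_id.const_mul ((n : ℝ) + 1)))
    · refine (ae_restrict_iff' measurableSet_Ioc).2 (ae_of_all _ fun u hu => ?_)
      rw [Real.coe_toNNReal _ (upperGrid_nonneg n u)]
      refine hle _ ⟨upperGrid_nonneg n u, (upperGrid_le n hu.1.le).trans ?_⟩
      exact add_le_add hu.2 (div_le_self zero_le_one (by simp))
    · rw [setLIntegral_const]
      exact ENNReal.mul_ne_top hM measure_Ioc_lt_top.ne
    · refine (ae_restrict_iff' measurableSet_Ioc).2 (ae_of_all _ fun u hu => ?_)
      refine tendsto_const_nhds.congr' ?_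
      filter_upwards [eventually_apply_upperGrid_eq hright hu.1.le] with n hn
      rw [Real.coe_toNNReal _ (upperGrid_nonneg n u), hn]

end

end IsCTSRW

/-! ### The quenched return probability -/

/-- `E₀[p(∫₀ᵗ f(S_u) du); S_t = 0]`, where `p` is the return probability of the walk on `ℤ`. For
`f` the scenery this is the quenched return probability of the layered walk. -/
def quenchedReturn {m : ℕ} {Ω : Type*} [MeasurableSpace Ω] (P : (Fin m → ℤ) → Measure Ω)
    (S : ℝ → Ω → (Fin m → ℤ)) (f : (Fin m → ℤ) → ℝ≥0∞) (t : ℝ) : ℝ≥0∞ :=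
  ∫⁻ ω in {ω | S t ω = 0}, ENNReal.ofReal (returnProb (additiveFunctional S f t ω).toReal) ∂P 0

section

variable {d : ℕ} {Ω : Type*} [MeasurableSpace Ω] {P : (Fin (d + 1) → ℤ) → Measure Ω}
  {S : ℝ → Ω → (Fin (d + 1) → ℤ)} {Ωz : Type*} {z : (Fin d → ℤ) → Ωz → ℝ}

lemma clock_eq_toReal_additiveFunctional (hS : IsCTSRW (d + 1) P S) (hz : ∀ y ζ, 0 ≤ z y ζ)
    (t : ℝ) (ζ : Ωz) (ω : Ω) : clock d z S t ζ ω = (additiveFunctional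
      (fun u ω => Fin.tail (S u ω)) (fun y => ENNReal.ofReal (z y ζ)) t ω).toReal :=
  integral_eq_lintegral_of_nonneg_ae (ae_of_all _ fun _ => hz _ _)
    ((Measurable.of_discrete (f := fun y => z y ζ)).comp
      (hS.tail.meas.comp (measurable_id.prodMk measurable_const))).aestronglyMeasurable

lemma measure_layeredWalk_eq_zero (hS : IsCTSRW (d + 1) P S) (hz : ∀ y ζ, 0 ≤ z y ζ) {t : ℝ}
    (ht : 0 ≤ t) (ζ : Ωz) : P 0 {ω | layeredWalk d z S t ζ ω = 0}
      = quenchedReturn (fun x => P (Fin.cons 0 x)) (fun u ω => Fin.tail (S u ω))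
        (fun y => ENNReal.ofReal (z y ζ)) t := by
  have := hS.prob 0
  have h0 : (Fin.cons 0 0 : Fin (d + 1) → ℤ) = 0 := Fin.cons_self_tail 0
  obtain ⟨Φ, hΦ, hae⟩ := hS.tail.exists_measurable_additiveFunctional_eq 0
    (f := fun y => ENNReal.ofReal (z y ζ)) (fun _ => ENNReal.ofReal_ne_top) ht
  rw [h0] at hae
  set Y : Ω → ℝ≥0 → Fin d → ℤ := fun ω u => Fin.tail (S u ω)
  have hY : Measurable Y := measurable_pi_lambda _ fun u => hS.measurable_tail u
  have hsample := measure_sample_inter_preimage (X := fun s ω => S s ω 0) (Y := Y)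
    (τ := fun w => (Φ w).toReal) (A := {0}) (B := {w | w ⟨t, ht⟩ = 0})
    ((measurable_pi_apply 0).comp hS.meas)
    (by
      filter_upwards [hS.rightCont 0] with ω hω s hs
      obtain ⟨ε, hε, h⟩ := hω s hs
      exact ⟨ε, hε, fun u h1 h2 => congrFun (h u h1 h2) 0⟩)
    hY (fun s hs => hS.indepFun_head_tail 0 ⟨s, hs⟩) hΦ.ennreal_toReal
    (fun _ => ENNReal.toReal_nonneg) (measurableSet_singleton 0)
    (measurable_pi_apply _ (measurableSet_singleton 0))
  have hhead (ω : Ω) : P 0 ((fun ω' => S (Φ (Y ω)).toReal ω' 0) ⁻¹' {0})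
      = ENNReal.ofReal (returnProb (Φ (Y ω)).toReal) :=
    hS.measure_head_eq 0 ENNReal.toReal_nonneg
  simp_rw [hhead] at hsample
  rw [quenchedReturn, h0]
  refine Eq.trans (measure_congr ?_) (hsample.trans (setLIntegral_congr_fun_ae ?_ ?_))
  · filter_upwards [hae] with ω hω
    refine propext (?_ : layeredWalk d z S t ζ ω = 0 ↔ S (Φ (Y ω)).toReal ω 0 = 0 ∧ Y ω ⟨t, ht⟩ = 0)
    rw [layeredWalk, clock_eq_toReal_additiveFunctional hS hz, hω, Prod.ext_iff]
    rfl
  · exact hS.measurable_tail t (measurableSet_singleton 0)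
  · filter_upwards [hae] with ω hω _
    rw [hω]

end

/-! ### Laplace transforms and lower tails of the scenery -/

section

variable {Ω : Type*} [MeasurableSpace Ω] {μ : Measure Ω} {X : Ω → ℝ}

lemma exists_mul_rpow_neg_le_measure_gt [IsFiniteMeasure μ] {α β : ℝ} (hα : 0 < α) (hαβ : α < β)
    (htail : Tendsto (fun r => Real.log (μ.real {ω | r < X ω}) / Real.log r) atTop (𝓝 (-α))) :
    ∃ c > 0, ∀ r, 1 ≤ r → c * r ^ (-β) ≤ μ.real {ω | r < X ω} := by
  have hevent := ((htail.eventually_const_lt (neg_lt_neg hαβ)).and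
    (htail.eventually_lt_const (neg_lt_zero.2 hα))).and (eventually_gt_atTop 1)
  obtain ⟨R₀, hR₀⟩ := hevent.exists_forall_of_atTop
  have hlarge (r : ℝ) (hr : R₀ ≤ r) : r ^ (-β) ≤ μ.real {ω | r < X ω} := by
    obtain ⟨⟨hlow, hneg⟩, hr1⟩ := hR₀ r hr
    -- The quotient is also `0` when the tail vanishes, as `Real.log 0 = 0`.
    have hpos : 0 < μ.real {ω | r < X ω} := measureReal_nonneg.lt_of_ne' fun h => by
      simp [h] at hneg
    rw [← Real.exp_log hpos, Real.rpow_def_of_pos (zero_lt_one.trans hr1), Real.exp_le_exp]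
    linarith [(lt_div_iff₀ (Real.log_pos hr1)).1 hlow]
  have hR1 : 1 ≤ max R₀ 1 := le_max_right _ _
  have hβ : -β ≤ 0 := by linarith
  refine ⟨max R₀ 1 ^ (-β), by positivity, fun r hr => ?_⟩
  rcases le_total (max R₀ 1) r with h | h
  · have hle := hlarge r ((le_max_left _ _).trans h)
    have hone := Real.rpow_le_one_of_one_le_of_nonpos hR1 hβ
    exact (mul_le_of_le_one_left (by positivity) hone).trans hle
  · calc max R₀ 1 ^ (-β) * r ^ (-β) ≤ max R₀ 1 ^ (-β) :=
        mul_le_of_le_one_right (by positivity) (Real.rpow_le_one_of_one_le_of_nonpos hr hβ)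
      _ ≤ μ.real {ω | max R₀ 1 < X ω} := hlarge _ (le_max_left _ _)
      _ ≤ μ.real {ω | r < X ω} := measureReal_mono fun ω hω => h.trans_lt hω

lemma integrable_exp_neg_mul [IsFiniteMeasure μ] (hX : Measurable X) (hX0 : ∀ ω, 0 ≤ X ω) {s : ℝ}
    (hs : 0 ≤ s) : Integrable (fun ω => Real.exp (-s * X ω)) μ :=
  .of_bound (hX.const_mul _).exp.aestronglyMeasurable 1 <| ae_of_all _ fun ω => by
    rw [Real.norm_of_nonneg (Real.exp_pos _).le, Real.exp_le_one_iff]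
    nlinarith [hX0 ω]

lemma mgf_neg_le_exp [IsProbabilityMeasure μ] (hX : Measurable X) (hX0 : ∀ ω, 0 ≤ X ω) {s : ℝ}
    (hs : 0 ≤ s) (r : ℝ) :
    mgf X μ (-s) ≤ Real.exp (-((1 - Real.exp (-(s * r))) * μ.real {ω | r < X ω})) := by
  set κ := 1 - Real.exp (-(s * r))
  have hE : MeasurableSet {ω | r < X ω} := hX measurableSet_Ioi
  have hpoint (ω : Ω) : Real.exp (-s * X ω) ≤ 1 - {ω | r < X ω}.indicator (fun _ => κ) ω := by
    by_cases h : r < X ω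
    · rw [indicator_of_mem (by exact h), sub_sub_cancel, Real.exp_le_exp]
      nlinarith
    · rw [indicator_of_notMem (by exact h), sub_zero, Real.exp_le_one_iff]
      nlinarith [hX0 ω]
  calc mgf X μ (-s) ≤ ∫ ω, (1 - {ω | r < X ω}.indicator (fun _ => κ) ω) ∂μ :=
        integral_mono (integrable_exp_neg_mul hX hX0 hs)
          ((integrable_const _).sub ((integrable_const κ).indicator hE)) hpoint
    _ = -(κ * μ.real {ω | r < X ω}) + 1 := by
        rw [integral_sub (integrable_const _) ((integrable_const κ).indicator hE),
          integral_indicator_const _ hE, integral_const, probReal_univ, smul_eq_mul, smul_eq_mul]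
        ring
    _ ≤ _ := Real.add_one_le_exp _

lemma one_sub_exp_neg_one_pos : 0 < 1 - Real.exp (-1) := by
  rw [sub_pos, Real.exp_lt_one_iff]
  norm_num

lemma mul_one_sub_exp_neg_one_le {s : ℝ} (hs : s ∈ Icc (0 : ℝ) 1) :
    s * (1 - Real.exp (-1)) ≤ 1 - Real.exp (-s) := by
  have h := convexOn_exp.2 (mem_univ 0) (mem_univ (-1)) (sub_nonneg.2 hs.2) hs.1 (by ring)
  simp only [smul_eq_mul, mul_zero, zero_add, Real.exp_zero, mul_one, mul_neg] at h
  linarith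

lemma mgf_neg_le_exp_rpow [IsProbabilityMeasure μ] (hX : Measurable X) (hX0 : ∀ ω, 0 ≤ X ω)
    {c β : ℝ} (hβ : 0 < β) (htail : ∀ r, 1 ≤ r → c * r ^ (-β) ≤ μ.real {ω | r < X ω}) {s : ℝ}
    (hs : s ∈ Icc (0 : ℝ) 1) :
    mgf X μ (-s) ≤ Real.exp (-((1 - Real.exp (-1)) * c * s ^ β)) := by
  rcases hs.1.eq_or_lt with rfl | hs0
  · simp [Real.zero_rpow hβ.ne']
  refine (mgf_neg_le_exp hX hX0 hs.1 s⁻¹).trans (Real.exp_le_exp.2 (neg_le_neg ?_))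
  have h := htail s⁻¹ ((one_le_inv₀ hs0).2 hs.2)
  rw [Real.inv_rpow hs.1, Real.rpow_neg hs.1, inv_inv] at h
  rw [mul_inv_cancel₀ hs0.ne', mul_assoc]
  exact mul_le_mul_of_nonneg_left h one_sub_exp_neg_one_pos.le

lemma mgf_neg_le_exp_linear [IsProbabilityMeasure μ] (hX : Measurable X) (hX0 : ∀ ω, 0 ≤ X ω)
    {s : ℝ} (hs : s ∈ Icc (0 : ℝ) 1) :
    mgf X μ (-s) ≤ Real.exp (-((1 - Real.exp (-1)) * μ.real {ω | 1 < X ω} * s)) := by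
  refine (mgf_neg_le_exp hX hX0 hs.1 1).trans (Real.exp_le_exp.2 (neg_le_neg ?_))
  rw [mul_one, mul_right_comm, mul_comm (1 - Real.exp (-1))]
  exact mul_le_mul_of_nonneg_right (mul_one_sub_exp_neg_one_le hs) measureReal_nonneg

end

section

variable {ι Ω : Type*} [MeasurableSpace Ω] {μ : Measure Ω} {z : ι → Ω → ℝ} {c β : ℝ} {F : Finset ι}
  {l : ι → ℝ} {M a : ℝ}

lemma mgf_sum_mul_neg_inv_le_exp (hmeas : ∀ y, Measurable (z y)) (hindep : iIndepFun z μ)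
    (hc : 0 ≤ c) (hβ1 : β ≤ 1)
    (hlaplace : ∀ y, ∀ s ∈ Icc (0 : ℝ) 1, mgf (z y) μ (-s) ≤ Real.exp (-(c * s ^ β)))
    (hM : 0 < M) (hMa : M ≤ a) (hl : ∀ y ∈ F, 0 ≤ l y) (hlM : ∀ y ∈ F, l y ≤ M) :
    mgf (∑ y ∈ F, fun ω => l y * z y ω) μ (-a⁻¹)
      ≤ Real.exp (-(c * (M / a) ^ β * ((∑ y ∈ F, l y) / M))) := by
  have ha : 0 < a := hM.trans_le hMa
  have hpoint (y : ι) (hy : y ∈ F) :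
      mgf (fun ω => l y * z y ω) μ (-a⁻¹) ≤ Real.exp (-(c * (M / a) ^ β * (l y / M))) := by
    have hl0 : 0 ≤ l y / M := div_nonneg (hl y hy) hM.le
    have hs : l y / a ∈ Icc (0 : ℝ) 1 :=
      ⟨div_nonneg (hl y hy) ha.le, (div_le_one ha).2 ((hlM y hy).trans hMa)⟩
    rw [mgf_const_mul, mul_neg, ← div_eq_mul_inv]
    refine (hlaplace y _ hs).trans (Real.exp_le_exp.2 (neg_le_neg ?_))
    -- The concave power `s ^ β` lies above its chord over `[0, M / a]`.
    calc c * (M / a) ^ β * (l y / M) ≤ c * (M / a) ^ β * (l y / M) ^ β := by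
          gcongr
          exact Real.self_le_rpow_of_le_one hl0 ((div_le_one hM).2 (hlM y hy)) hβ1
      _ = c * (l y / a) ^ β := by
          rw [mul_assoc, ← Real.mul_rpow (by positivity) hl0, div_mul_div_cancel₀' hM.ne']
  have hindep' : iIndepFun (fun y ω => l y * z y ω) μ :=
    hindep.comp (fun y v => l y * v) fun y => measurable_id.const_mul _
  rw [hindep'.mgf_sum (fun y => (hmeas y).const_mul _) F, Finset.sum_div, Finset.mul_sum,
    ← Finset.sum_neg_distrib, Real.exp_sum]
  exact Finset.prod_le_prod (fun _ _ => mgf_nonneg) hpoint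

lemma measure_sum_mul_le_le_exp (hmeas : ∀ y, Measurable (z y)) (hnonneg : ∀ y ω, 0 ≤ z y ω)
    (hindep : iIndepFun z μ) (hc : 0 ≤ c) (hβ1 : β ≤ 1)
    (hlaplace : ∀ y, ∀ s ∈ Icc (0 : ℝ) 1, mgf (z y) μ (-s) ≤ Real.exp (-(c * s ^ β)))
    (hM : 0 < M) (hMa : M ≤ a) (hl : ∀ y ∈ F, 0 ≤ l y) (hlM : ∀ y ∈ F, l y ≤ M) :
    μ.real {ω | ∑ y ∈ F, l y * z y ω ≤ a}
      ≤ Real.exp (1 - c * (M / a) ^ β * ((∑ y ∈ F, l y) / M)) := by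
  have := hindep.isProbabilityMeasure
  have ha : 0 < a := hM.trans_le hMa
  have hX : Measurable (∑ y ∈ F, fun ω => l y * z y ω) := by
    rw [Finset.sum_fn]
    exact Finset.measurable_sum _ fun y _ => (hmeas y).const_mul _
  have hX0 (ω : Ω) : 0 ≤ (∑ y ∈ F, fun ω => l y * z y ω) ω := by
    rw [Finset.sum_apply]
    exact Finset.sum_nonneg fun y hy => mul_nonneg (hl y hy) (hnonneg y ω)
  calc μ.real {ω | ∑ y ∈ F, l y * z y ω ≤ a}
      = μ.real {ω | (∑ y ∈ F, fun ω => l y * z y ω) ω ≤ a} := by simp only [Finset.sum_apply]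
    _ ≤ Real.exp (-(-a⁻¹) * a) * mgf (∑ y ∈ F, fun ω => l y * z y ω) μ (-a⁻¹) :=
        measure_le_le_exp_mul_mgf a (by simpa using ha.le)
          (integrable_exp_neg_mul hX hX0 (inv_nonneg.2 ha.le))
    _ ≤ Real.exp 1 * Real.exp (-(c * (M / a) ^ β * ((∑ y ∈ F, l y) / M))) := by
        rw [neg_neg, inv_mul_cancel₀ ha.ne']
        gcongr
        exact mgf_sum_mul_neg_inv_le_exp hmeas hindep hc hβ1 hlaplace hM hMa hl hlM
    _ = _ := by rw [← Real.exp_add, ← sub_eq_add_neg]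

end

namespace IsScenery

variable {d : ℕ} {α : ℝ} {Ω : Type*} [MeasurableSpace Ω] {μ : Measure Ω}
  {z : (Fin d → ℤ) → Ω → ℝ}

lemma exists_mgf_neg_le_exp_rpow (hz : IsScenery d α μ z) (hα : 0 < α) {β : ℝ} (hαβ : α < β) :
    ∃ c > 0, ∀ y, ∀ s ∈ Icc (0 : ℝ) 1, mgf (z y) μ (-s) ≤ Real.exp (-(c * s ^ β)) := by
  have := hz.prob
  obtain ⟨c, hc, htail⟩ := exists_mul_rpow_neg_le_measure_gt hα hαβ hz.tail
  refine ⟨_, mul_pos one_sub_exp_neg_one_pos hc, fun y s hs => ?_⟩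
  rw [mgf_congr_identDistrib (hz.ident y)]
  exact mgf_neg_le_exp_rpow (hz.meas 0) (hz.nonneg 0) (hα.trans hαβ) htail hs

lemma exists_mgf_neg_le_exp_linear (hz : IsScenery d α μ z) (hα : 0 < α) :
    ∃ c > 0, ∀ y, ∀ s ∈ Icc (0 : ℝ) 1, mgf (z y) μ (-s) ≤ Real.exp (-(c * s ^ (1 : ℝ))) := by
  have := hz.prob
  obtain ⟨c, hc, htail⟩ := exists_mul_rpow_neg_le_measure_gt hα (lt_add_one α) hz.tail
  have hpos : 0 < μ.real {ω | 1 < z 0 ω} := by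
    simpa using (mul_pos hc (Real.rpow_pos_of_pos one_pos _)).trans_le (htail 1 le_rfl)
  refine ⟨_, mul_pos one_sub_exp_neg_one_pos hpos, fun y s hs => ?_⟩
  rw [mgf_congr_identDistrib (hz.ident y), Real.rpow_one]
  exact mgf_neg_le_exp_linear (hz.meas 0) (hz.nonneg 0) hs

end IsScenery

/-! ### Moments of local times -/

lemma lintegral_pi_succ {E : Type*} [MeasurableSpace E] {ν : Measure E} [SigmaFinite ν] {n : ℕ}
    {f : (Fin (n + 1) → E) → ℝ≥0∞} (hf : Measurable f) :
    ∫⁻ u, f u ∂(Measure.pi fun _ => ν)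
      = ∫⁻ u, ∫⁻ a, f (Fin.cons a u) ∂ν ∂(Measure.pi fun _ => ν) := by
  have hmp := (measurePreserving_piFinSuccAbove (fun _ : Fin (n + 1) => ν) 0).symm
  have hcons (a : E) (u : Fin n → E) :
      (MeasurableEquiv.piFinSuccAbove (fun _ : Fin (n + 1) => E) 0).symm (a, u) = Fin.cons a u :=
    Fin.insertNth_zero' a u
  rw [← hmp.lintegral_comp hf]
  refine (lintegral_prod_symm _ (hf.comp hmp.measurable).aemeasurable).trans ?_
  simp only [Function.comp_apply, hcons]

section

variable {k : ℝ → ℝ≥0∞}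

lemma measurable_prod_sub (hk : Measurable k) {n : ℕ} (σ : Equiv.Perm (Fin (n + 1))) :
    Measurable fun u : Fin (n + 1) → ℝ => ∏ i : Fin n, k (u (σ i.succ) - u (σ i.castSucc)) :=
  Finset.measurable_fun_prod _ fun i _ =>
    hk.comp ((measurable_pi_apply (σ i.succ)).sub (measurable_pi_apply (σ i.castSucc)))

lemma lintegral_prod_sub_le (hk : Measurable k) (A : Set ℝ) (n : ℕ) :
    ∫⁻ u : Fin (n + 1) → ℝ, ∏ i : Fin n, k (u i.succ - u i.castSucc)
      ∂(Measure.pi fun _ => volume.restrict A) ≤ volume A * (∫⁻ x, k x) ^ n := by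
  induction n with
  | zero => simp [Measure.pi_univ]
  | succ n ih =>
    have hmeas (j : ℕ) : Measurable fun u : Fin (j + 1) → ℝ =>
        ∏ i : Fin j, k (u i.succ - u i.castSucc) := measurable_prod_sub hk (Equiv.refl _)
    have hprod (a : ℝ) (u : Fin (n + 1) → ℝ) :
        ∏ i : Fin (n + 1), k ((Fin.cons a u : Fin (n + 2) → ℝ) i.succ
            - (Fin.cons a u : Fin (n + 2) → ℝ) i.castSucc)
          = k (u 0 - a) * ∏ i : Fin n, k (u i.succ - u i.castSucc) := by
      simp only [Fin.prod_univ_succ, Fin.cons_succ, Fin.castSucc_zero, Fin.cons_zero,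
        ← Fin.succ_castSucc]
    rw [lintegral_pi_succ (hmeas _)]
    simp only [hprod]
    calc _ ≤ ∫⁻ u : Fin (n + 1) → ℝ, (∫⁻ x, k x) * ∏ i : Fin n, k (u i.succ - u i.castSucc)
          ∂(Measure.pi fun _ => volume.restrict A) := lintegral_mono fun u => by
            have hm : Measurable fun a => k (u 0 - a) :=
              hk.comp (measurable_const.sub measurable_id)
            rw [lintegral_mul_const _ hm]
            refine mul_le_mul_left ?_ _
            exact (setLIntegral_le_lintegral _ _).trans
              (lintegral_sub_left_eq_self (μ := volume) k (u 0)).le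
      _ ≤ (∫⁻ x, k x) * (volume A * (∫⁻ x, k x) ^ n) := by
          rw [lintegral_const_mul _ (hmeas n)]
          gcongr
      _ = _ := by ring

lemma lintegral_prod_sub_perm_le (hk : Measurable k) (A : Set ℝ) {n : ℕ}
    (σ : Equiv.Perm (Fin (n + 1))) :
    ∫⁻ u : Fin (n + 1) → ℝ, ∏ i : Fin n, k (u (σ i.succ) - u (σ i.castSucc))
      ∂(Measure.pi fun _ => volume.restrict A) ≤ volume A * (∫⁻ x, k x) ^ n := by
  have hmp := measurePreserving_piCongrLeft
    (fun _ : Fin (n + 1) => (volume : Measure ℝ).restrict A) σ.symm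
  have hmeas := measurable_prod_sub hk (Equiv.refl (Fin (n + 1)))
  have happly (u : Fin (n + 1) → ℝ) (j : Fin (n + 1)) :
      MeasurableEquiv.piCongrLeft (fun _ : Fin (n + 1) => ℝ) σ.symm u j = u (σ j) := by
    have h := Equiv.piCongrLeft_apply_apply (fun _ : Fin (n + 1) => ℝ) σ.symm u (σ j)
    rwa [Equiv.symm_apply_apply] at h
  refine (le_of_eq ?_).trans (lintegral_prod_sub_le hk A n)
  simp only [Equiv.refl_apply] at hmeas
  simp only [← hmp.lintegral_comp hmeas, happly]

end

/-- The truncated Green function `∫₀ᵗ P₀(S_u = 0) du` of the walk on `ℤ^m`. -/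
def greenUpTo (m : ℕ) (t : ℝ) : ℝ≥0∞ := ∫⁻ x in Icc 0 t, ENNReal.ofReal (returnProb x ^ m)

lemma exists_greenUpTo_le {m : ℕ} (hm : m ≠ 0) :
    ∃ C > 0, ∀ t > 0, greenUpTo m t ≤ ENNReal.ofReal (C * √t) := by
  obtain ⟨C, hC, hle⟩ := exists_returnProb_le
  refine ⟨2 * C, by positivity, fun t ht => ?_⟩
  have hint : IntervalIntegrable (fun x : ℝ => C * x ^ (-(1 / 2) : ℝ)) volume 0 t :=
    (intervalIntegral.intervalIntegrable_rpow' (by norm_num)).const_mul _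
  have hpoint (x : ℝ) (hx : x ∈ Ioc 0 t) : returnProb x ^ m ≤ C * x ^ (-(1 / 2) : ℝ) :=
    calc returnProb x ^ m ≤ returnProb x :=
          pow_le_of_le_one (returnProb_nonneg x) (returnProb_le_one hx.1.le) hm
      _ ≤ C * x ^ (-(1 / 2) : ℝ) := by
          rw [Real.rpow_neg hx.1.le, ← Real.sqrt_eq_rpow]
          exact hle x hx.1
  rw [greenUpTo, setLIntegral_congr Ioc_ae_eq_Icc.symm]
  calc _ ≤ ∫⁻ x in Ioc 0 t, ENNReal.ofReal (C * x ^ (-(1 / 2) : ℝ)) :=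
        setLIntegral_mono' measurableSet_Ioc fun x hx => ENNReal.ofReal_le_ofReal (hpoint x hx)
    _ = ENNReal.ofReal (∫ x in Ioc 0 t, C * x ^ (-(1 / 2) : ℝ)) := by
        refine (ofReal_integral_eq_lintegral_ofReal
          ((intervalIntegrable_iff_integrableOn_Ioc_of_le ht.le).1 hint) ?_).symm
        filter_upwards [ae_restrict_mem measurableSet_Ioc] with x hx
        have := hx.1
        positivity
    _ = ENNReal.ofReal (2 * C * √t) := by
        rw [← intervalIntegral.integral_of_le ht.le, intervalIntegral.integral_const_mul,
          integral_rpow (Or.inl (by norm_num)), Real.sqrt_eq_rpow]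
        norm_num
        ring_nf

/-- The time spent at `y` up to time `t`. -/
def localTime {Ω E : Type*} (S : ℝ → Ω → E) (t : ℝ) (y : E) (ω : Ω) : ℝ≥0∞ :=
  volume.restrict (Ioc 0 t) {u | S u ω = y}

namespace IsCTSRW

variable {m : ℕ} {Ω : Type*} [MeasurableSpace Ω] {P : (Fin m → ℤ) → Measure Ω}
  {S : ℝ → Ω → (Fin m → ℤ)}

lemma measurable_path (hS : IsCTSRW m P S) (ω : Ω) : Measurable fun u => S u ω :=
  hS.meas.comp (measurable_id.prodMk measurable_const)

lemma additiveFunctional_eq_tsum_localTime (hS : IsCTSRW m P S) (f : (Fin m → ℤ) → ℝ≥0∞) (t : ℝ)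
    (ω : Ω) : additiveFunctional S f t ω = ∑' y, f y * localTime S t y ω := by
  rw [additiveFunctional, ← lintegral_map .of_discrete (hS.measurable_path ω), lintegral_countable']
  exact tsum_congr fun y => by
    rw [Measure.map_apply (hS.measurable_path ω) (measurableSet_singleton y)]; rfl

lemma tsum_localTime (hS : IsCTSRW m P S) (t : ℝ) (ω : Ω) :
    ∑' y, localTime S t y ω = ENNReal.ofReal t := by
  simpa [additiveFunctional] using
    (hS.additiveFunctional_eq_tsum_localTime (fun _ => 1) t ω).symm

lemma measurable_localTime (hS : IsCTSRW m P S) (t : ℝ) (y : Fin m → ℤ) :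
    Measurable (localTime S t y) := by
  have h (ω : Ω) : localTime S t y ω = additiveFunctional S (Pi.single y 1) t ω := by
    rw [hS.additiveFunctional_eq_tsum_localTime, tsum_eq_single y (by simp +contextual)]
    simp
  rw [funext h]
  exact hS.measurable_additiveFunctional _ t

lemma tsum_localTime_pow (hS : IsCTSRW m P S) (n : ℕ) (t : ℝ) (ω : Ω) :
    ∑' y, localTime S t y ω ^ (n + 1)
      = (Measure.pi fun _ : Fin (n + 1) => volume.restrict (Ioc 0 t))
        {u | ∀ i, S (u i) ω = S (u 0) ω} := by
  have hunion : {u : Fin (n + 1) → ℝ | ∀ i, S (u i) ω = S (u 0) ω}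
      = ⋃ y, Set.pi univ fun _ => {v | S v ω = y} := by
    ext u
    simp only [mem_ofPred_eq, mem_iUnion, Set.mem_pi, mem_univ, true_imp_iff]
    exact ⟨fun h => ⟨_, h⟩, fun ⟨y, h⟩ i => (h i).trans (h 0).symm⟩
  rw [hunion, measure_iUnion]
  · simp [localTime]
  · refine fun y y' hy => Set.disjoint_left.2 fun u h h' => hy ?_
    exact (h 0 (mem_univ _)).symm.trans (h' 0 (mem_univ _))
  · exact fun y => .univ_pi fun _ => hS.measurable_path ω (measurableSet_singleton y)

/-- The increments between the ordered times are independent returns to `0`; summing over all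
orders removes the need to know which one it is. -/
lemma measure_forall_eq_le_sum_perm (hS : IsCTSRW m P S) (x : Fin m → ℤ) {n : ℕ} {t : ℝ}
    {u : Fin (n + 1) → ℝ} (hu : ∀ i, u i ∈ Ioc 0 t) :
    P x {ω | ∀ i, S (u i) ω = S (u 0) ω} ≤ ∑ σ : Equiv.Perm (Fin (n + 1)), ∏ i : Fin n,
      (Icc 0 t).indicator (fun v => ENNReal.ofReal (returnProb v ^ m))
        (u (σ i.succ) - u (σ i.castSucc)) := by
  have hmono := Tuple.monotone_sort u
  set σ := Tuple.sort u
  refine le_trans ?_ (Finset.single_le_sum (fun _ _ => zero_le) (Finset.mem_univ σ))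
  calc _ ≤ P x {ω | ∀ i, S ((u ∘ σ) i) ω = S ((u ∘ σ) 0) ω} :=
        measure_mono fun ω hω i => (hω _).trans (hω _).symm
    _ = ∏ i : Fin n, ENNReal.ofReal (returnProb ((u ∘ σ) i.succ - (u ∘ σ) i.castSucc) ^ m) :=
        hS.measure_forall_eq x (hu _).1.le hmono
    _ ≤ _ := Finset.prod_le_prod' fun i _ => by
        have hle : u (σ i.castSucc) ≤ u (σ i.succ) := hmono i.castSucc_lt_succ.le
        rw [indicator_of_mem]
        · rfl
        · exact ⟨sub_nonneg.2 hle, by linarith [(hu (σ i.succ)).2, (hu (σ i.castSucc)).1]⟩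

lemma lintegral_tsum_localTime_pow_le (hS : IsCTSRW m P S) (x : Fin m → ℤ) (n : ℕ) (t : ℝ) :
    ∫⁻ ω, ∑' y, localTime S t y ω ^ (n + 1) ∂P x
      ≤ (n + 1).factorial * (ENNReal.ofReal t * greenUpTo m t ^ n) := by
  have := hS.prob x
  set ν := Measure.pi fun _ : Fin (n + 1) => (volume : Measure ℝ).restrict (Ioc 0 t)
  have hk : Measurable ((Icc 0 t).indicator fun v => ENNReal.ofReal (returnProb v ^ m)) :=
    (ENNReal.measurable_ofReal.comp (measurable_returnProb.pow_const m)).indicator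
      measurableSet_Icc
  have hcoord (i : Fin (n + 1)) : Measurable fun p : Ω × (Fin (n + 1) → ℝ) => S (p.2 i) p.1 :=
    hS.meas.comp (f := fun p : Ω × (Fin (n + 1) → ℝ) => (p.2 i, p.1))
      (((measurable_pi_apply i).comp measurable_snd).prodMk measurable_fst)
  have hE : MeasurableSet {p : Ω × (Fin (n + 1) → ℝ) | ∀ i, S (p.2 i) p.1 = S (p.2 0) p.1} := by
    simp only [ofPred_forall]
    exact .iInter fun i => measurableSet_eq_fun (hcoord i) (hcoord 0)
  have hmem : ∀ᵐ u ∂ν, ∀ i, u i ∈ Ioc 0 t := ae_all_iff.2 fun i =>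
    Measure.tendsto_eval_ae_ae.eventually (ae_restrict_mem measurableSet_Ioc)
  calc ∫⁻ ω, ∑' y, localTime S t y ω ^ (n + 1) ∂P x
      = ∫⁻ u, P x {ω | ∀ i, S (u i) ω = S (u 0) ω} ∂ν := by
        simp_rw [hS.tsum_localTime_pow]
        exact (Measure.prod_apply (μ := P x) (ν := ν) hE).symm.trans (Measure.prod_apply_symm hE)
    _ ≤ ∫⁻ u, ∑ σ : Equiv.Perm (Fin (n + 1)), ∏ i : Fin n,
          (Icc 0 t).indicator (fun v => ENNReal.ofReal (returnProb v ^ m))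
            (u (σ i.succ) - u (σ i.castSucc)) ∂ν :=
        lintegral_mono_ae (hmem.mono fun u hu => hS.measure_forall_eq_le_sum_perm x hu)
    _ ≤ ∑ _σ : Equiv.Perm (Fin (n + 1)), ENNReal.ofReal t * greenUpTo m t ^ n := by
        rw [lintegral_finsetSum _ fun σ _ => measurable_prod_sub hk σ]
        refine Finset.sum_le_sum fun σ _ => (lintegral_prod_sub_perm_le hk _ σ).trans_eq ?_
        rw [lintegral_indicator measurableSet_Icc, Real.volume_Ioc, sub_zero, greenUpTo]
    _ = _ := by
        rw [Finset.sum_const, Finset.card_univ, Fintype.card_perm, Fintype.card_fin, nsmul_eq_mul]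

end IsCTSRW

section

variable {ι : Type*} {L : ι → ℝ≥0∞}

lemma pow_mul_tsum_indicator_lt_le (L : ι → ℝ≥0∞) (M : ℝ≥0∞) (n : ℕ) :
    M ^ n * ∑' y, {y | M < L y}.indicator L y ≤ ∑' y, L y ^ (n + 1) := by
  rw [← ENNReal.tsum_mul_left]
  refine ENNReal.tsum_le_tsum fun y => ?_
  by_cases h : M < L y
  · rw [indicator_of_mem (by exact h), pow_succ]
    gcongr
  · simp [indicator_of_notMem (s := {y | M < L y}) h]

lemma exists_finset_le_and_half_le_sum {t M : ℝ} (ht : 0 < t) (hM : 0 < M) {n : ℕ}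
    (hsum : ∑' y, L y = ENNReal.ofReal t)
    (hpow : ∑' y, L y ^ (n + 1) ≤ ENNReal.ofReal (M ^ n * (t / 4))) :
    ∃ F : Finset ι, (∀ y ∈ F, (L y).toReal ≤ M) ∧ t / 2 ≤ ∑ y ∈ F, (L y).toReal := by
  classical
  have htop (y : ι) : L y ≠ ⊤ :=
    ne_top_of_le_ne_top (hsum ▸ ENNReal.ofReal_ne_top) (ENNReal.le_tsum y)
  have hlarge : ∑' y, {y | ENNReal.ofReal M < L y}.indicator L y ≤ ENNReal.ofReal (t / 4) := by
    have h := (pow_mul_tsum_indicator_lt_le L (ENNReal.ofReal M) n).trans hpow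
    rw [ENNReal.ofReal_mul (by positivity), ENNReal.ofReal_pow hM.le] at h
    exact (ENNReal.mul_le_mul_iff_right (pow_ne_zero _ (ENNReal.ofReal_pos.2 hM).ne')
      (ENNReal.pow_ne_top ENNReal.ofReal_ne_top)).1 h
  have hsmall : ENNReal.ofReal (t / 2)
      < ∑' y, {y | ENNReal.ofReal M < L y}ᶜ.indicator L y := by
    by_contra! hle
    have h := add_le_add hlarge hle
    rw [← ENNReal.tsum_add, ← ENNReal.ofReal_add (by positivity) (by positivity)] at h
    simp only [indicator_self_add_compl_apply, hsum] at h
    linarith [(ENNReal.ofReal_le_ofReal_iff (by positivity)).1 h]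
  rw [ENNReal.tsum_eq_iSup_sum, lt_iSup_iff] at hsmall
  obtain ⟨F, hF⟩ := hsmall
  refine ⟨F.filter fun y => L y ≤ ENNReal.ofReal M, fun y hy => ?_, ?_⟩
  · exact ENNReal.toReal_le_of_le_ofReal hM.le (Finset.mem_filter.1 hy).2
  · rw [← ENNReal.toReal_sum fun y _ => htop y,
      ← ENNReal.ofReal_le_iff_le_toReal (ENNReal.sum_ne_top.2 fun y _ => htop y), Finset.sum_filter]
    simpa [indicator_apply] using hF.le

end

lemma IsCTSRW.exists_measure_tsum_localTime_pow_le {m : ℕ} (hm : m ≠ 0) {Ω : Type*}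
    [MeasurableSpace Ω] {P : (Fin m → ℤ) → Measure Ω} {S : ℝ → Ω → (Fin m → ℤ)}
    (hS : IsCTSRW m P S) (x : Fin m → ℤ) :
    ∃ C : ℝ, ∀ t > 0,
      P x {ω | ENNReal.ofReal ((t ^ (9 / 10 : ℝ)) ^ 3 * (t / 4)) < ∑' y, localTime S t y ω ^ 4}
        ≤ ENNReal.ofReal (C * t ^ (-(6 / 5) : ℝ)) := by
  obtain ⟨C, hC, hgreen⟩ := exists_greenUpTo_le hm
  refine ⟨96 * C ^ 3, fun t ht => ?_⟩
  have hpos : 0 < (t ^ (9 / 10 : ℝ)) ^ 3 * (t / 4) := by positivity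
  have hexp : 24 * (t * (C * √t) ^ 3) / ((t ^ (9 / 10 : ℝ)) ^ 3 * (t / 4))
      = 96 * C ^ 3 * t ^ (-(6 / 5) : ℝ) := by
    rw [Real.sqrt_eq_rpow, mul_pow, ← Real.rpow_natCast, ← Real.rpow_natCast (t ^ (9 / 10 : ℝ)),
      ← Real.rpow_natCast (t ^ (1 / 2 : ℝ)), ← Real.rpow_mul ht.le, ← Real.rpow_mul ht.le,
      show (-(6 / 5) : ℝ) = 1 / 2 * (3 : ℕ) - 9 / 10 * (3 : ℕ) by norm_num, Real.rpow_sub ht]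
    field_simp
    norm_num
  calc P x {ω | ENNReal.ofReal ((t ^ (9 / 10 : ℝ)) ^ 3 * (t / 4)) < ∑' y, localTime S t y ω ^ 4}
      ≤ (∫⁻ ω, ∑' y, localTime S t y ω ^ 4 ∂P x)
          / ENNReal.ofReal ((t ^ (9 / 10 : ℝ)) ^ 3 * (t / 4)) :=
        (measure_mono fun ω => le_of_lt (α := ℝ≥0∞)).trans <| meas_ge_le_lintegral_div
          (Measurable.tsum fun y => (hS.measurable_localTime t y).pow_const 4).aemeasurable
          (ENNReal.ofReal_pos.2 hpos).ne' ENNReal.ofReal_ne_top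
    _ ≤ ENNReal.ofReal (24 * (t * (C * √t) ^ 3))
          / ENNReal.ofReal ((t ^ (9 / 10 : ℝ)) ^ 3 * (t / 4)) := by
        gcongr
        refine (hS.lintegral_tsum_localTime_pow_le x 3 t).trans ?_
        rw [ENNReal.ofReal_mul (by norm_num), ENNReal.ofReal_mul ht.le,
          ENNReal.ofReal_pow (by positivity)]
        gcongr
        · norm_num [Nat.factorial]
        · exact hgreen t ht
    _ = _ := by rw [← ENNReal.ofReal_div_of_pos hpos, hexp]

/-! ### Transience -/

section

variable {m : ℕ} {Ω Θ : Type*} [MeasurableSpace Ω] [MeasurableSpace Θ]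
  {P : (Fin m → ℤ) → Measure Ω} {S : ℝ → Ω → (Fin m → ℤ)} {f : Θ → (Fin m → ℤ) → ℝ≥0∞}

lemma measurable_ofReal_returnProb_toReal :
    Measurable fun a : ℝ≥0∞ => ENNReal.ofReal (returnProb a.toReal) :=
  (measurable_returnProb.comp ENNReal.measurable_toReal).ennreal_ofReal

lemma IsCTSRW.measurable_indicator_additiveFunctional (hS : IsCTSRW m P S)
    (hf : ∀ y, Measurable fun θ => f θ y) {g : ℝ≥0∞ → ℝ≥0∞} (hg : Measurable g) :
    Measurable fun q : (Θ × ℝ) × Ω => {ω | S q.1.2 ω = 0}.indicator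
      (fun ω => g (additiveFunctional S (f q.1.1) q.1.2 ω)) q.2 := by
  have hreturn : MeasurableSet {q : (Θ × ℝ) × Ω | S q.1.2 q.2 = 0} :=
    (hS.meas.comp (measurable_fst.snd.prodMk measurable_snd)) (measurableSet_singleton 0)
  exact (hg.comp (hS.measurable_additiveFunctional_prod hf)).indicator hreturn

lemma IsCTSRW.measurableSet_return (hS : IsCTSRW m P S) (t : ℝ) : MeasurableSet {ω | S t ω = 0} :=
  hS.measurable_apply t (measurableSet_singleton 0)

lemma IsCTSRW.measurable_setLIntegral_additiveFunctional (hS : IsCTSRW m P S)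
    (hf : ∀ y, Measurable fun θ => f θ y) {g : ℝ≥0∞ → ℝ≥0∞} (hg : Measurable g) :
    Measurable fun p : Θ × ℝ =>
      ∫⁻ ω in {ω | S p.2 ω = 0}, g (additiveFunctional S (f p.1) p.2 ω) ∂P 0 := by
  have := hS.prob 0
  simp_rw [← lintegral_indicator (hS.measurableSet_return _)]
  exact (hS.measurable_indicator_additiveFunctional hf hg).lintegral_prod_right'

lemma IsCTSRW.lintegral_setLIntegral_additiveFunctional (hS : IsCTSRW m P S) {μ : Measure Θ}
    [SFinite μ] (hf : ∀ y, Measurable fun θ => f θ y) {g : ℝ≥0∞ → ℝ≥0∞} (hg : Measurable g)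
    (t : ℝ) :
    ∫⁻ θ, ∫⁻ ω in {ω | S t ω = 0}, g (additiveFunctional S (f θ) t ω) ∂P 0 ∂μ
      = ∫⁻ ω in {ω | S t ω = 0}, ∫⁻ θ, g (additiveFunctional S (f θ) t ω) ∂μ ∂P 0 := by
  have := hS.prob 0
  have hmeas : Measurable fun q : Θ × Ω => g (additiveFunctional S (f q.1) t q.2) :=
    (hg.comp (hS.measurable_additiveFunctional_prod hf)).comp
      ((measurable_fst.prodMk measurable_const).prodMk measurable_snd)
  exact lintegral_lintegral_swap hmeas.aemeasurable

lemma IsCTSRW.quenchedReturn_le_one (hS : IsCTSRW m P S) (f : (Fin m → ℤ) → ℝ≥0∞) (t : ℝ) :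
    quenchedReturn P S f t ≤ 1 := by
  have := hS.prob 0
  calc quenchedReturn P S f t ≤ ∫⁻ _ in {ω | S t ω = 0}, 1 ∂P 0 :=
        lintegral_mono fun ω =>
          ENNReal.ofReal_le_one.2 (returnProb_le_one ENNReal.toReal_nonneg)
    _ ≤ 1 := by simpa using prob_le_one

end

lemma lintegral_ofReal_returnProb_le {Θ : Type*} [MeasurableSpace Θ] {μ : Measure Θ}
    [IsProbabilityMeasure μ] {A : Θ → ℝ≥0∞} {B : Θ → ℝ} (hA : ∀ θ, A θ ≠ ⊤)
    (hBA : ∀ θ, ENNReal.ofReal (B θ) ≤ A θ) {a : ℝ} (ha : 0 ≤ a) :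
    ∫⁻ θ, ENNReal.ofReal (returnProb (A θ).toReal) ∂μ
      ≤ ENNReal.ofReal (returnProb a) + μ {θ | B θ ≤ a} := by
  calc ∫⁻ θ, ENNReal.ofReal (returnProb (A θ).toReal) ∂μ
      ≤ ∫⁻ θ, ENNReal.ofReal (returnProb a) + {θ | B θ ≤ a}.indicator (fun _ => 1) θ ∂μ := by
        refine lintegral_mono fun θ => ?_
        by_cases h : B θ ≤ a
        · rw [indicator_of_mem (by exact h)]
          exact le_add_left (ENNReal.ofReal_le_one.2 (returnProb_le_one ENNReal.toReal_nonneg))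
        · have hle : a ≤ (A θ).toReal :=
            (not_le.1 h).le.trans ((ENNReal.ofReal_le_iff_le_toReal (hA θ)).1 (hBA θ))
          exact le_add_right (ENNReal.ofReal_le_ofReal
            (antitoneOn_returnProb ha (ha.trans hle) hle))
    _ ≤ ENNReal.ofReal (returnProb a) + μ {θ | B θ ≤ a} := by
        rw [lintegral_add_left measurable_const, lintegral_const, measure_univ, mul_one]
        gcongr
        simpa using lintegral_indicator_const_le {θ | B θ ≤ a} (1 : ℝ≥0∞)

section

variable {m : ℕ} {Ω Ωz : Type*} [MeasurableSpace Ω] [MeasurableSpace Ωz]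
  {P : (Fin m → ℤ) → Measure Ω} {S : ℝ → Ω → (Fin m → ℤ)} {μ : Measure Ωz}
  {z : (Fin m → ℤ) → Ωz → ℝ} {c β ρ : ℝ}

lemma IsCTSRW.lintegral_returnProb_additiveFunctional_le (hS : IsCTSRW m P S)
    (hmeas : ∀ y, Measurable (z y)) (hnonneg : ∀ y ζ, 0 ≤ z y ζ) (hindep : iIndepFun z μ)
    (hc : 0 ≤ c) (hβ : β ≤ 1)
    (hlaplace : ∀ y, ∀ s ∈ Icc (0 : ℝ) 1, mgf (z y) μ (-s) ≤ Real.exp (-(c * s ^ β)))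
    (hρ : 9 / 10 ≤ ρ) {t : ℝ} (ht : 1 ≤ t) {ω : Ω}
    (hfin : ∀ f : (Fin m → ℤ) → ℝ≥0∞, (∀ y, f y ≠ ⊤) → additiveFunctional S f t ω < ⊤)
    (hpow : ∑' y, localTime S t y ω ^ 4 ≤ ENNReal.ofReal ((t ^ (9 / 10 : ℝ)) ^ 3 * (t / 4))) :
    ∫⁻ ζ, ENNReal.ofReal
        (returnProb (additiveFunctional S (fun y => ENNReal.ofReal (z y ζ)) t ω).toReal) ∂μ
      ≤ ENNReal.ofReal (returnProb (t ^ ρ))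
        + ENNReal.ofReal (Real.exp (1 - c / 2 * t ^ (1 / 10 + β * (9 / 10 - ρ)))) := by
  have := hindep.isProbabilityMeasure
  have ht0 : 0 < t := by positivity
  obtain ⟨F, hF, hFsum⟩ :=
    exists_finset_le_and_half_le_sum ht0 (by positivity) (hS.tsum_localTime t ω) hpow
  set l : (Fin m → ℤ) → ℝ := fun y => (localTime S t y ω).toReal
  have hlower (ζ : Ωz) : ENNReal.ofReal (∑ y ∈ F, l y * z y ζ)
      ≤ additiveFunctional S (fun y => ENNReal.ofReal (z y ζ)) t ω := by
    rw [hS.additiveFunctional_eq_tsum_localTime,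
      ENNReal.ofReal_sum_of_nonneg fun y _ => mul_nonneg ENNReal.toReal_nonneg (hnonneg y ζ)]
    refine (Finset.sum_le_sum fun y _ => ?_).trans (ENNReal.sum_le_tsum F)
    rw [mul_comm, ENNReal.ofReal_mul (hnonneg y ζ)]
    gcongr
    exact ENNReal.ofReal_toReal_le
  have hchernoff := measure_sum_mul_le_le_exp hmeas hnonneg hindep hc hβ hlaplace
    (Real.rpow_pos_of_pos ht0 _) (Real.rpow_le_rpow_of_exponent_le ht hρ)
    (fun y _ => ENNReal.toReal_nonneg) hF
  have hexponent : c / 2 * t ^ (1 / 10 + β * (9 / 10 - ρ))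
      ≤ c * (t ^ (9 / 10 : ℝ) / t ^ ρ) ^ β * ((∑ y ∈ F, l y) / t ^ (9 / 10 : ℝ)) :=
    calc c / 2 * t ^ (1 / 10 + β * (9 / 10 - ρ))
        = c * (t ^ (9 / 10 : ℝ) / t ^ ρ) ^ β * (t / 2 / t ^ (9 / 10 : ℝ)) := by
          rw [← Real.rpow_sub ht0, ← Real.rpow_mul ht0.le, Real.rpow_add ht0, mul_comm β,
            show (1 / 10 : ℝ) = 1 - 9 / 10 by norm_num, Real.rpow_sub ht0, Real.rpow_one]
          ring
      _ ≤ _ := by gcongr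
  refine (lintegral_ofReal_returnProb_le (fun ζ => (hfin _ fun _ => ENNReal.ofReal_ne_top).ne)
    hlower (Real.rpow_nonneg ht0.le ρ)).trans ?_
  gcongr
  rw [← ofReal_measureReal]
  exact ENNReal.ofReal_le_ofReal (hchernoff.trans (Real.exp_le_exp.2 (by linarith)))

end

section

variable {m : ℕ} {Ω Ωz : Type*} [MeasurableSpace Ω] [MeasurableSpace Ωz]
  {P : (Fin m → ℤ) → Measure Ω} {S : ℝ → Ω → (Fin m → ℤ)} {μ : Measure Ωz}
  {z : (Fin m → ℤ) → Ωz → ℝ} {c β ρ : ℝ}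

lemma IsCTSRW.exists_measure_return_mul_le (hS : IsCTSRW m P S) (ρ : ℝ) :
    ∃ C : ℝ, ∀ t > 0, ENNReal.ofReal (returnProb (t ^ ρ)) * P 0 {ω | S t ω = 0}
      ≤ ENNReal.ofReal (C * t ^ (-((m + ρ) / 2))) := by
  obtain ⟨C, hC, hupper⟩ := exists_returnProb_le
  refine ⟨C ^ (m + 1), fun t ht => ?_⟩
  have hexp : C / √(t ^ ρ) * (C / √t) ^ m = C ^ (m + 1) * t ^ (-((m + ρ) / 2)) := by
    rw [Real.sqrt_eq_rpow, Real.sqrt_eq_rpow, ← Real.rpow_mul ht.le, div_pow, ← Real.rpow_natCast,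
      ← Real.rpow_natCast (t ^ _), ← Real.rpow_mul ht.le, div_mul_div_comm, ← Real.rpow_add ht,
      Real.rpow_neg ht.le, Real.rpow_natCast, pow_succ']
    ring_nf
  rw [hS.measure_eq 0 ht.le, heatKernel_self, ← ENNReal.ofReal_mul (returnProb_nonneg _), ← hexp]
  gcongr
  · exact pow_nonneg (returnProb_nonneg t) m
  · exact hupper _ (Real.rpow_pos_of_pos ht ρ)
  · exact returnProb_nonneg t
  · exact hupper t ht

lemma IsCTSRW.lintegral_quenchedReturn_le (hS : IsCTSRW m P S) (hmeas : ∀ y, Measurable (z y))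
    (hnonneg : ∀ y ζ, 0 ≤ z y ζ) (hindep : iIndepFun z μ) (hc : 0 ≤ c) (hβ : β ≤ 1)
    (hlaplace : ∀ y, ∀ s ∈ Icc (0 : ℝ) 1, mgf (z y) μ (-s) ≤ Real.exp (-(c * s ^ β)))
    (hρ : 9 / 10 ≤ ρ) {t : ℝ} (ht : 1 ≤ t) :
    ∫⁻ ζ, quenchedReturn P S (fun y => ENNReal.ofReal (z y ζ)) t ∂μ
      ≤ (ENNReal.ofReal (returnProb (t ^ ρ))
          + ENNReal.ofReal (Real.exp (1 - c / 2 * t ^ (1 / 10 + β * (9 / 10 - ρ)))))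
            * P 0 {ω | S t ω = 0}
        + P 0 {ω | ENNReal.ofReal ((t ^ (9 / 10 : ℝ)) ^ 3 * (t / 4))
            < ∑' y, localTime S t y ω ^ 4} := by
  have := hindep.isProbabilityMeasure
  have := hS.prob 0
  set bad : Set Ω :=
    {ω | ENNReal.ofReal ((t ^ (9 / 10 : ℝ)) ^ 3 * (t / 4)) < ∑' y, localTime S t y ω ^ 4}
  set K : ℝ≥0∞ := ENNReal.ofReal (returnProb (t ^ ρ))
    + ENNReal.ofReal (Real.exp (1 - c / 2 * t ^ (1 / 10 + β * (9 / 10 - ρ))))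
  have hpath : ∀ᵐ ω ∂P 0, ∫⁻ ζ, ENNReal.ofReal
        (returnProb (additiveFunctional S (fun y => ENNReal.ofReal (z y ζ)) t ω).toReal) ∂μ
      ≤ K + bad.indicator (fun _ => 1) ω := by
    filter_upwards [hS.ae_additiveFunctional_lt_top 0 (zero_le_one.trans ht)] with ω hfin
    by_cases hω : ω ∈ bad
    · rw [indicator_of_mem hω]
      refine le_add_left ((lintegral_mono fun ζ => ENNReal.ofReal_le_one.2
        (returnProb_le_one ENNReal.toReal_nonneg)).trans ?_)
      simp
    · exact le_add_right (hS.lintegral_returnProb_additiveFunctional_le hmeas hnonneg hindep hc hβ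
        hlaplace hρ ht hfin (not_lt.1 hω))
  calc ∫⁻ ζ, quenchedReturn P S (fun y => ENNReal.ofReal (z y ζ)) t ∂μ
      ≤ ∫⁻ ω in {ω | S t ω = 0}, K + bad.indicator (fun _ => 1) ω ∂P 0 := by
        unfold quenchedReturn
        rw [hS.lintegral_setLIntegral_additiveFunctional (fun y => (hmeas y).ennreal_ofReal)
          measurable_ofReal_returnProb_toReal]
        exact lintegral_mono_ae (ae_restrict_of_ae hpath)
    _ ≤ K * P 0 {ω | S t ω = 0} + P 0 bad := by
        rw [lintegral_add_left measurable_const, setLIntegral_const]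
        gcongr
        simpa using (setLIntegral_le_lintegral _ _).trans (lintegral_indicator_const_le bad 1)

lemma IsCTSRW.exists_lintegral_quenchedReturn_le (hS : IsCTSRW m P S) (hm : m ≠ 0)
    (hmeas : ∀ y, Measurable (z y)) (hnonneg : ∀ y ζ, 0 ≤ z y ζ) (hindep : iIndepFun z μ)
    (hc : 0 ≤ c) (hβ : β ≤ 1)
    (hlaplace : ∀ y, ∀ s ∈ Icc (0 : ℝ) 1, mgf (z y) μ (-s) ≤ Real.exp (-(c * s ^ β)))
    (hρ : 9 / 10 ≤ ρ) :
    ∃ C : ℝ, ∀ t ≥ 1, ∫⁻ ζ, quenchedReturn P S (fun y => ENNReal.ofReal (z y ζ)) t ∂μ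
      ≤ ENNReal.ofReal (C * t ^ (-((m + ρ) / 2)))
        + ENNReal.ofReal (Real.exp (1 - c / 2 * t ^ (1 / 10 + β * (9 / 10 - ρ))))
        + ENNReal.ofReal (C * t ^ (-(6 / 5) : ℝ)) := by
  have := hS.prob 0
  obtain ⟨C₁, hbad⟩ := hS.exists_measure_tsum_localTime_pow_le hm 0
  obtain ⟨C₂, hret⟩ := hS.exists_measure_return_mul_le ρ
  refine ⟨max C₁ C₂, fun t ht => ?_⟩
  have ht0 : 0 < t := by positivity
  refine (hS.lintegral_quenchedReturn_le hmeas hnonneg hindep hc hβ hlaplace hρ ht).trans ?_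
  rw [add_mul]
  gcongr
  · refine (hret t ht0).trans ?_
    gcongr
    exact le_max_right _ _
  · exact mul_le_of_le_one_right' prob_le_one
  · refine (hbad t ht0).trans ?_
    gcongr
    exact le_max_left _ _

lemma setLIntegral_ofReal_exp_sub_mul_rpow_ne_top {b η : ℝ} (hb : 0 < b) (hη : 0 < η) :
    ∫⁻ t in Ioi (1 : ℝ), ENNReal.ofReal (Real.exp (1 - b * t ^ η)) ≠ ⊤ := by
  have hint : IntegrableOn (fun t : ℝ => Real.exp (1 - b * t ^ η)) (Ioi 0) := by
    simp_rw [sub_eq_add_neg, Real.exp_add, ← neg_mul]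
    refine (Integrable.of_integral_ne_zero ?_).const_mul _
    rw [integral_exp_neg_mul_rpow hη hb]
    have := Real.Gamma_pos_of_pos (by positivity : 0 < 1 / η + 1)
    positivity
  exact (hint.mono_set (Ioi_subset_Ioi zero_le_one)).setLIntegral_lt_top.ne

lemma setLIntegral_ofReal_mul_rpow_ne_top (C : ℝ) {r : ℝ} (hr : r < -1) :
    ∫⁻ t in Ioi (1 : ℝ), ENNReal.ofReal (C * t ^ r) ≠ ⊤ :=
  IntegrableOn.setLIntegral_lt_top ((integrableOn_Ioi_rpow_of_lt hr one_pos).const_mul C) |>.ne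

lemma IsCTSRW.ae_lintegral_quenchedReturn_ne_top (hS : IsCTSRW m P S) (hm : m ≠ 0)
    (hmeas : ∀ y, Measurable (z y)) (hnonneg : ∀ y ζ, 0 ≤ z y ζ) (hindep : iIndepFun z μ)
    (hc : 0 < c) (hβ : β ≤ 1)
    (hlaplace : ∀ y, ∀ s ∈ Icc (0 : ℝ) 1, mgf (z y) μ (-s) ≤ Real.exp (-(c * s ^ β)))
    (hρ : 9 / 10 ≤ ρ) (hmρ : 2 < m + ρ) (hβρ : 0 < 1 / 10 + β * (9 / 10 - ρ)) :
    ∀ᵐ ζ ∂μ, ∫⁻ t in Ioi 0, quenchedReturn P S (fun y => ENNReal.ofReal (z y ζ)) t ≠ ⊤ := by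
  have := hindep.isProbabilityMeasure
  obtain ⟨C, hbound⟩ := hS.exists_lintegral_quenchedReturn_le hm hmeas hnonneg hindep hc.le hβ
    hlaplace hρ
  have hjoint : Measurable fun p : Ωz × ℝ =>
      quenchedReturn P S (fun y => ENNReal.ofReal (z y p.1)) p.2 :=
    hS.measurable_setLIntegral_additiveFunctional (fun y => (hmeas y).ennreal_ofReal)
      measurable_ofReal_returnProb_toReal
  have htail :
      ∫⁻ ζ, (∫⁻ t in Ioi 1, quenchedReturn P S (fun y => ENNReal.ofReal (z y ζ)) t) ∂μ ≠ ⊤ := by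
    rw [lintegral_lintegral_swap hjoint.aemeasurable]
    refine ne_top_of_le_ne_top ?_
      (setLIntegral_mono' measurableSet_Ioi fun t ht => hbound t (le_of_lt ht))
    rw [lintegral_add_left (by fun_prop), lintegral_add_left (by fun_prop)]
    refine ENNReal.add_ne_top.2 ⟨ENNReal.add_ne_top.2 ⟨?_, ?_⟩, ?_⟩
    · exact setLIntegral_ofReal_mul_rpow_ne_top C (by linarith)
    · exact setLIntegral_ofReal_exp_sub_mul_rpow_ne_top (half_pos hc) hβρ
    · exact setLIntegral_ofReal_mul_rpow_ne_top C (by norm_num)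
  filter_upwards [ae_lt_top hjoint.lintegral_prod_right' htail] with ζ hζ
  rw [← Ioc_union_Ioi_eq_Ioi zero_le_one,
    lintegral_union measurableSet_Ioi (Ioc_disjoint_Ioi le_rfl)]
  refine ENNReal.add_ne_top.2 ⟨ne_top_of_le_ne_top ENNReal.one_ne_top ?_, hζ.ne⟩
  simpa using lintegral_mono (μ := volume.restrict (Ioc (0 : ℝ) 1))
    fun t => hS.quenchedReturn_le_one (fun y => ENNReal.ofReal (z y ζ)) t

lemma IsScenery.ae_lintegral_quenchedReturn_ne_top_of_two_le {α : ℝ} (hz : IsScenery m α μ z)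
    (hα : 0 < α) (hS : IsCTSRW m P S) (hm : 2 ≤ m) :
    ∀ᵐ ζ ∂μ, ∫⁻ t in Ioi 0, quenchedReturn P S (fun y => ENNReal.ofReal (z y ζ)) t ≠ ⊤ := by
  obtain ⟨c, hc, hlaplace⟩ := hz.exists_mgf_neg_le_exp_linear hα
  have hm' : (2 : ℝ) ≤ m := by exact_mod_cast hm
  exact hS.ae_lintegral_quenchedReturn_ne_top (by lia) hz.meas hz.nonneg hz.indep hc le_rfl hlaplace
    (ρ := 19 / 20) (by norm_num) (by linarith) (by norm_num)

lemma IsScenery.ae_lintegral_quenchedReturn_ne_top_of_lt_one {z : (Fin 1 → ℤ) → Ωz → ℝ}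
    {P : (Fin 1 → ℤ) → Measure Ω} {S : ℝ → Ω → (Fin 1 → ℤ)} {α : ℝ} (hz : IsScenery 1 α μ z)
    (hα : 0 < α) (hα1 : α < 1) (hS : IsCTSRW 1 P S) :
    ∀ᵐ ζ ∂μ, ∫⁻ t in Ioi 0, quenchedReturn P S (fun y => ENNReal.ofReal (z y ζ)) t ≠ ⊤ := by
  obtain ⟨β, hαβ, hβ1⟩ := exists_between hα1
  have hβ : 0 < β := hα.trans hαβ
  obtain ⟨c, hc, hlaplace⟩ := hz.exists_mgf_neg_le_exp_rpow hα hαβ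
  -- `ρ > 1` makes `t ^ (-(1 + ρ) / 2)` integrable, `ρ < 9 / 10 + 1 / (10 * β)` makes the Chernoff
  -- exponent positive.
  obtain ⟨ρ, hρ1, hρ⟩ : ∃ ρ, 1 < ρ ∧ ρ < 9 / 10 + 1 / 10 / β :=
    exists_between (by linarith [(lt_div_iff₀ hβ).2 (by linarith : 1 / 10 * β < 1 / 10)])
  have hβρ : (ρ - 9 / 10) * β < 1 / 10 := (lt_div_iff₀ hβ).1 (by linarith)
  exact hS.ae_lintegral_quenchedReturn_ne_top one_ne_zero hz.meas hz.nonneg hz.indep hc hβ1.le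
    hlaplace (ρ := ρ) (by linarith) (by push_cast; linarith) (by linarith)

end

/-! ### Recurrence -/

lemma ofReal_returnProb_le_add {H : ℝ} (hH : 0 < H) (a : ℝ≥0∞) :
    ENNReal.ofReal (returnProb H)
      ≤ ENNReal.ofReal (returnProb a.toReal) + ENNReal.ofReal (returnProb H / H) * a := by
  obtain h | h := le_total a (ENNReal.ofReal H)
  · exact le_add_right (ENNReal.ofReal_le_ofReal (antitoneOn_returnProb ENNReal.toReal_nonneg hH.le
      (ENNReal.toReal_le_of_le_ofReal hH.le h)))
  · refine le_add_left ?_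
    calc ENNReal.ofReal (returnProb H)
        = ENNReal.ofReal (returnProb H / H) * ENNReal.ofReal H := by
          rw [← ENNReal.ofReal_mul (div_nonneg (returnProb_nonneg H) hH.le),
            div_mul_cancel₀ _ hH.ne']
      _ ≤ _ := by gcongr

lemma ae_exists_frequently_le_of_lintegral_le {Θ : Type*} [MeasurableSpace Θ] {μ : Measure Θ}
    {g : ℕ → Θ → ℝ≥0∞} (hg : ∀ n, Measurable (g n)) {M : ℝ≥0∞} (hM : M ≠ ⊤)
    (hle : ∀ n, ∫⁻ θ, g n θ ∂μ ≤ M) : ∀ᵐ θ ∂μ, ∃ K : ℝ≥0, ∃ᶠ n in atTop, g n θ ≤ K := by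
  have hliminf : ∫⁻ θ, liminf (fun n => g n θ) atTop ∂μ ≤ M :=
    (lintegral_liminf_le hg).trans <|
      (liminf_le_liminf (v := fun _ => M) (Eventually.of_forall hle)).trans (by simp)
  filter_upwards [ae_lt_top (.liminf hg) (ne_top_of_le_ne_top hM hliminf)] with θ hθ
  obtain ⟨K, hK, -⟩ := ENNReal.lt_iff_exists_nnreal_btwn.1 hθ
  exact ⟨K, (frequently_lt_of_liminf_lt (by isBoundedDefault) hK).mono fun n => le_of_lt⟩

lemma exists_one_le_div_sq_le (K : ℝ) {c : ℝ} (hc : 0 < c) : ∃ b : ℝ, 1 ≤ b ∧ K / b ^ 2 ≤ c := by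
  have hlim : Tendsto (fun b : ℝ => K / b ^ 2) atTop (𝓝 0) :=
    tendsto_const_nhds.div_atTop (tendsto_pow_atTop two_ne_zero)
  exact ((eventually_ge_atTop 1).and (hlim.eventually_le_const hc)).exists

/-- `E₀[∫₀ᵗ f(S_u) du; S_t = 0]`, the mean of the clock of the layered walk on the event that its
transversal component has returned; it controls the quenched return probability from below. -/
def meanReturnClock {m : ℕ} {Ω : Type*} [MeasurableSpace Ω] (P : (Fin m → ℤ) → Measure Ω)
    (S : ℝ → Ω → (Fin m → ℤ)) (f : (Fin m → ℤ) → ℝ≥0∞) (t : ℝ) : ℝ≥0∞ :=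
  ∫⁻ ω in {ω | S t ω = 0}, additiveFunctional S f t ω ∂P 0

namespace IsCTSRW

section

variable {m : ℕ} {Ω Θ : Type*} [MeasurableSpace Ω] [MeasurableSpace Θ]
  {P : (Fin m → ℤ) → Measure Ω} {S : ℝ → Ω → (Fin m → ℤ)} {f : Θ → (Fin m → ℤ) → ℝ≥0∞}
  {μ : Measure Θ} {κ : ℝ≥0∞}

lemma lintegral_additiveFunctional_le (hS : IsCTSRW m P S) (hf : ∀ y, Measurable fun θ => f θ y)
    (hκ : ∀ y, ∫⁻ θ, f θ y ∂μ ≤ κ) (t : ℝ) (ω : Ω) :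
    ∫⁻ θ, additiveFunctional S (f θ) t ω ∂μ ≤ κ * ENNReal.ofReal t := by
  simp_rw [hS.additiveFunctional_eq_tsum_localTime]
  rw [lintegral_tsum fun y => ((hf y).mul_const _).aemeasurable, ← hS.tsum_localTime t ω,
    ← ENNReal.tsum_mul_left]
  refine ENNReal.tsum_le_tsum fun y => ?_
  rw [lintegral_mul_const _ (hf y)]
  gcongr
  exact hκ y

lemma lintegral_meanReturnClock_le [SFinite μ] (hS : IsCTSRW m P S)
    (hf : ∀ y, Measurable fun θ => f θ y) (hκ : ∀ y, ∫⁻ θ, f θ y ∂μ ≤ κ) (t : ℝ) :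
    ∫⁻ θ, meanReturnClock P S (f θ) t ∂μ ≤ κ * ENNReal.ofReal t * P 0 {ω | S t ω = 0} := by
  refine (hS.lintegral_setLIntegral_additiveFunctional hf measurable_id t).trans_le ?_
  rw [← setLIntegral_const]
  exact lintegral_mono fun ω => hS.lintegral_additiveFunctional_le hf hκ t ω

lemma ofReal_returnProb_mul_measure_le (hS : IsCTSRW m P S) (f : (Fin m → ℤ) → ℝ≥0∞) {H : ℝ}
    (hH : 0 < H) (t : ℝ) :
    ENNReal.ofReal (returnProb H) * P 0 {ω | S t ω = 0} ≤ quenchedReturn P S f t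
      + ENNReal.ofReal (returnProb H / H) * meanReturnClock P S f t := by
  have hA := hS.measurable_additiveFunctional f t
  unfold quenchedReturn meanReturnClock
  rw [← setLIntegral_const, ← lintegral_const_mul _ hA, ← lintegral_add_right _ (hA.const_mul _)]
  exact lintegral_mono fun ω => ofReal_returnProb_le_add hH _

end

variable {Ω Θ : Type*} [MeasurableSpace Ω] [MeasurableSpace Θ] {P : (Fin 1 → ℤ) → Measure Ω}
  {S : ℝ → Ω → (Fin 1 → ℤ)} {f : Θ → (Fin 1 → ℤ) → ℝ≥0∞} {μ : Measure Θ} {κ : ℝ≥0∞}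

lemma measure_return (hS : IsCTSRW 1 P S) {t : ℝ} (ht : 0 ≤ t) :
    P 0 {ω | S t ω = 0} = ENNReal.ofReal (returnProb t) := by
  rw [hS.measure_eq 0 ht, heatKernel_self, pow_one]

lemma measurable_meanReturnClock (hS : IsCTSRW 1 P S) (hf : ∀ y, Measurable fun θ => f θ y) :
    Measurable fun p : Θ × ℝ => meanReturnClock P S (f p.1) p.2 :=
  hS.measurable_setLIntegral_additiveFunctional hf measurable_id

lemma exists_lintegral_setLIntegral_meanReturnClock_le [SFinite μ] (hS : IsCTSRW 1 P S)
    (hf : ∀ y, Measurable fun θ => f θ y) (hκ : ∀ y, ∫⁻ θ, f θ y ∂μ ≤ κ) :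
    ∃ C : ℝ, ∀ s > 0, ∫⁻ θ, (∫⁻ t in Ioc (s ^ 2) ((2 * s) ^ 2), meanReturnClock P S (f θ) t) ∂μ
      ≤ κ * ENNReal.ofReal (C * s ^ 3) := by
  obtain ⟨C, hC, hupper⟩ := exists_returnProb_le
  refine ⟨12 * C, fun s hs => ?_⟩
  rw [lintegral_lintegral_swap (hS.measurable_meanReturnClock hf).aemeasurable]
  calc ∫⁻ t in Ioc (s ^ 2) ((2 * s) ^ 2), ∫⁻ θ, meanReturnClock P S (f θ) t ∂μ
      ≤ ∫⁻ _ in Ioc (s ^ 2) ((2 * s) ^ 2), κ * ENNReal.ofReal (4 * C * s) := by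
        refine setLIntegral_mono' measurableSet_Ioc fun t ht => ?_
        have hs2 : 0 < s ^ 2 := by positivity
        have ht0 : 0 ≤ t := hs2.le.trans ht.1.le
        have hq : returnProb t ≤ C / s := by
          simpa [Real.sqrt_sq hs.le] using
            (antitoneOn_returnProb hs2.le ht0 ht.1.le).trans (hupper _ hs2)
        refine (hS.lintegral_meanReturnClock_le hf hκ t).trans ?_
        rw [hS.measure_return ht0, mul_assoc, ← ENNReal.ofReal_mul ht0]
        refine mul_le_mul_right (ENNReal.ofReal_le_ofReal ?_) κ
        calc t * returnProb t ≤ (2 * s) ^ 2 * (C / s) :=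
              mul_le_mul ht.2 hq (returnProb_nonneg t) (by positivity)
          _ = 4 * C * s := by field_simp; ring
    _ = κ * ENNReal.ofReal (12 * C * s ^ 3) := by
        rw [setLIntegral_const, Real.volume_Ioc, mul_assoc, ← ENNReal.ofReal_mul (by positivity)]
        ring_nf

lemma exists_ofReal_le_setLIntegral_measure_return (hS : IsCTSRW 1 P S) :
    ∃ c > 0, ∀ s ≥ 1,
      ENNReal.ofReal (c * s) ≤ ∫⁻ t in Ioc (s ^ 2) ((2 * s) ^ 2), P 0 {ω | S t ω = 0} := by
  obtain ⟨c, hc, hlower⟩ := exists_le_returnProb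
  refine ⟨3 / 2 * c, by positivity, fun s hs => ?_⟩
  have hq : c / (2 * s) ≤ returnProb ((2 * s) ^ 2) := by
    simpa [Real.sqrt_sq (by positivity : 0 ≤ 2 * s)] using
      hlower ((2 * s) ^ 2) (one_le_pow₀ (by linarith))
  calc ENNReal.ofReal (3 / 2 * c * s)
      = ∫⁻ _ in Ioc (s ^ 2) ((2 * s) ^ 2), ENNReal.ofReal (c / (2 * s)) := by
        rw [setLIntegral_const, Real.volume_Ioc, ← ENNReal.ofReal_mul (by positivity)]
        congr 1
        field_simp
        ring
    _ ≤ _ := setLIntegral_mono' measurableSet_Ioc fun t ht => by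
        have ht0 : 0 ≤ t := (sq_nonneg s).trans ht.1.le
        rw [hS.measure_return ht0]
        exact ENNReal.ofReal_le_ofReal
          (hq.trans (antitoneOn_returnProb ht0 (sq_nonneg (2 * s)) ht.2))

lemma ofReal_returnProb_mul_setLIntegral_le (hS : IsCTSRW 1 P S) (f : (Fin 1 → ℤ) → ℝ≥0∞) {H : ℝ}
    (hH : 0 < H) (A : Set ℝ) :
    ENNReal.ofReal (returnProb H) * ∫⁻ t in A, P 0 {ω | S t ω = 0}
      ≤ (∫⁻ t in A, quenchedReturn P S f t)
        + ENNReal.ofReal (returnProb H / H) * ∫⁻ t in A, meanReturnClock P S f t := by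
  have hclock : Measurable (meanReturnClock P S f) :=
    (hS.measurable_meanReturnClock (Θ := Unit) (f := fun _ => f) fun _ => measurable_const).comp
      (measurable_prodMk_left (x := ()))
  rw [← lintegral_const_mul' _ _ ENNReal.ofReal_ne_top, ← lintegral_const_mul _ hclock,
    ← lintegral_add_right _ (hclock.const_mul _)]
  exact lintegral_mono fun t => hS.ofReal_returnProb_mul_measure_le f hH t

/-- At the clock level `(b * s) ^ 2` with `b` large in terms of `K`, the Markov error is at most
half of the main term. -/
lemma exists_ofReal_le_setLIntegral_quenchedReturn (hS : IsCTSRW 1 P S) (K : ℝ) :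
    ∃ ε > 0, ∀ s ≥ 1, ∀ f : (Fin 1 → ℤ) → ℝ≥0∞,
      ∫⁻ t in Ioc (s ^ 2) ((2 * s) ^ 2), meanReturnClock P S f t ≤ ENNReal.ofReal (K * s ^ 3) →
        ENNReal.ofReal ε ≤ ∫⁻ t in Ioc (s ^ 2) ((2 * s) ^ 2), quenchedReturn P S f t := by
  obtain ⟨c, hc, hreturn⟩ := hS.exists_ofReal_le_setLIntegral_measure_return
  obtain ⟨c', hc', hlower⟩ := exists_le_returnProb
  obtain ⟨b, hb, hbK⟩ := exists_one_le_div_sq_le K (half_pos hc)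
  refine ⟨c' * c / (2 * b), by positivity, fun s hs f hclock => ?_⟩
  set q := returnProb ((b * s) ^ 2)
  have hq : c' / (b * s) ≤ q := by
    simpa [Real.sqrt_sq (by positivity : 0 ≤ b * s)] using
      hlower ((b * s) ^ 2) (one_le_pow₀ (one_le_mul_of_one_le_of_one_le hb hs))
  have hq0 : 0 ≤ q := returnProb_nonneg _
  have hmarkov : ENNReal.ofReal (q * (c * s) / 2) + ENNReal.ofReal (q * (c * s) / 2)
      ≤ (∫⁻ t in Ioc (s ^ 2) ((2 * s) ^ 2), quenchedReturn P S f t)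
        + ENNReal.ofReal (q * (c * s) / 2) := by
    calc _ = ENNReal.ofReal q * ENNReal.ofReal (c * s) := by
          rw [← ENNReal.ofReal_add (by positivity) (by positivity), add_halves,
            ENNReal.ofReal_mul hq0]
      _ ≤ _ := mul_le_mul_right (hreturn s hs) _
      _ ≤ _ := hS.ofReal_returnProb_mul_setLIntegral_le f (by positivity : 0 < (b * s) ^ 2) _
      _ ≤ _ := by
          refine add_le_add_right ((mul_le_mul_right hclock _).trans ?_) _
          rw [← ENNReal.ofReal_mul (by positivity)]
          refine ENNReal.ofReal_le_ofReal ?_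
          calc q / (b * s) ^ 2 * (K * s ^ 3) = q * s * (K / b ^ 2) := by field_simp
            _ ≤ q * s * (c / 2) := by gcongr
            _ = q * (c * s) / 2 := by ring
  refine (ENNReal.ofReal_le_ofReal ?_).trans
    ((ENNReal.add_le_add_iff_right ENNReal.ofReal_ne_top).1 hmarkov)
  calc c' * c / (2 * b) = c' / (b * s) * (c * s) / 2 := by field_simp
    _ ≤ q * (c * s) / 2 := by gcongr

lemma ae_exists_frequently_setLIntegral_meanReturnClock_le [SFinite μ] (hS : IsCTSRW 1 P S)
    (hf : ∀ y, Measurable fun θ => f θ y) (hκ : ∀ y, ∫⁻ θ, f θ y ∂μ ≤ κ) (hκ' : κ ≠ ⊤)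
    {s : ℕ → ℝ} (hs : ∀ n, 0 < s n) :
    ∀ᵐ θ ∂μ, ∃ K : ℝ, ∃ᶠ n in atTop,
      ∫⁻ t in Ioc (s n ^ 2) ((2 * s n) ^ 2), meanReturnClock P S (f θ) t
        ≤ ENNReal.ofReal (K * s n ^ 3) := by
  obtain ⟨C, hmean⟩ := hS.exists_lintegral_setLIntegral_meanReturnClock_le hf hκ
  have hpos (n : ℕ) : 0 < s n ^ 3 := pow_pos (hs n) 3
  have hmeas (n : ℕ) : Measurable fun θ =>
      ∫⁻ t in Ioc (s n ^ 2) ((2 * s n) ^ 2), meanReturnClock P S (f θ) t :=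
    (hS.measurable_meanReturnClock hf).lintegral_prod_right'
  have hfreq := ae_exists_frequently_le_of_lintegral_le (μ := μ) (M := κ * ENNReal.ofReal C)
    (fun n => (hmeas n).div_const (ENNReal.ofReal (s n ^ 3)))
    (ENNReal.mul_ne_top hκ' ENNReal.ofReal_ne_top) fun n => by
      simp_rw [div_eq_mul_inv]
      rw [lintegral_mul_const _ (hmeas n), ← div_eq_mul_inv]
      refine ENNReal.div_le_of_le_mul ((hmean _ (hs n)).trans_eq ?_)
      rw [ENNReal.ofReal_mul' (hpos n).le, mul_assoc]
  filter_upwards [hfreq] with θ ⟨K, hK⟩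
  refine ⟨K, hK.mono fun n hn => ?_⟩
  rwa [ENNReal.ofReal_mul K.coe_nonneg, ENNReal.ofReal_coe_nnreal,
    ← ENNReal.div_le_iff (ENNReal.ofReal_pos.2 (hpos n)).ne' ENNReal.ofReal_ne_top]

lemma ae_lintegral_quenchedReturn_eq_top [SFinite μ] (hS : IsCTSRW 1 P S)
    (hf : ∀ y, Measurable fun θ => f θ y) (hκ : ∀ y, ∫⁻ θ, f θ y ∂μ ≤ κ) (hκ' : κ ≠ ⊤) :
    ∀ᵐ θ ∂μ, ∫⁻ t in Ioi 0, quenchedReturn P S (f θ) t = ⊤ := by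
  have hdisj : Pairwise (Function.onFun Disjoint fun n : ℕ =>
      Ioc (((2 : ℝ) ^ n) ^ 2) ((2 * 2 ^ n) ^ 2)) := by
    have hmono : Monotone fun n : ℕ => ((2 : ℝ) ^ n) ^ 2 := fun a b hab => by
      dsimp only
      gcongr
      norm_num
    simpa only [Order.succ_eq_add_one, pow_succ'] using hmono.pairwise_disjoint_on_Ioc_succ
  filter_upwards [hS.ae_exists_frequently_setLIntegral_meanReturnClock_le hf hκ hκ'
    (s := fun n => 2 ^ n) fun n => by positivity] with θ ⟨K, hK⟩
  obtain ⟨ε, hε, hlower⟩ := hS.exists_ofReal_le_setLIntegral_quenchedReturn K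
  by_contra hne
  have hsum : ∑' n : ℕ, ∫⁻ t in Ioc (((2 : ℝ) ^ n) ^ 2) ((2 * 2 ^ n) ^ 2),
      quenchedReturn P S (f θ) t ≠ ⊤ := by
    rw [← lintegral_iUnion (fun _ => measurableSet_Ioc) hdisj]
    refine ne_top_of_le_ne_top hne (lintegral_mono_set (iUnion_subset fun n t ht => ?_))
    exact lt_trans (by positivity) ht.1
  have hsmall := (ENNReal.tendsto_atTop_zero_of_tsum_ne_top hsum).eventually_lt_const
    (ENNReal.ofReal_pos.2 hε)
  obtain ⟨n, hclock, hlt⟩ := (hK.and_eventually hsmall).exists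
  exact (hlower _ (one_le_pow₀ one_le_two) _ hclock).not_gt hlt

end IsCTSRW

lemma IsScenery.ae_lintegral_quenchedReturn_eq_top {α : ℝ} {Ω Θ : Type*} [MeasurableSpace Ω]
    [MeasurableSpace Θ] {μ : Measure Θ} {z : (Fin 1 → ℤ) → Θ → ℝ} {P : (Fin 1 → ℤ) → Measure Ω}
    {S : ℝ → Ω → (Fin 1 → ℤ)} (hz : IsScenery 1 α μ z) (hS : IsCTSRW 1 P S)
    (hint : Integrable (z 0) μ) :
    ∀ᵐ ζ ∂μ, ∫⁻ t in Ioi 0, quenchedReturn P S (fun y => ENNReal.ofReal (z y ζ)) t = ⊤ := by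
  have := hz.prob
  exact hS.ae_lintegral_quenchedReturn_eq_top (fun y => (hz.meas y).ennreal_ofReal)
    (fun y => ((hz.ident y).comp ENNReal.measurable_ofReal).lintegral_eq.le)
    hint.lintegral_lt_top.ne

end

/-- Theorem (transience/recurrence of the layered random conductance walk): ℙ-a.s.,
the Green integral `∫₀^∞ P₀^ω(X_t = 0) dt` is finite when `d ≥ 2`, finite when `d = 1`
and `α < 1`, and infinite when `d = 1` and `𝔼[z(0)] < ∞`. -/
theorem stmt7 (d : ℕ) (hd : 1 ≤ d) (α : ℝ) (hα : 0 < α)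
    {Ωz Ωw : Type*} [MeasurableSpace Ωz] [MeasurableSpace Ωw]
    (μ : Measure Ωz) (z : (Fin d → ℤ) → Ωz → ℝ) (hz : IsScenery d α μ z)
    (P : (Fin (d + 1) → ℤ) → Measure Ωw) (S : ℝ → Ωw → (Fin (d + 1) → ℤ))
    (hS : IsCTSRW (d + 1) P S) :
    ∀ᵐ ζ ∂ μ,
      (2 ≤ d →
        (∫⁻ t in Set.Ioi (0 : ℝ), (P 0) {ω | layeredWalk d z S t ζ ω = 0}) ≠ ⊤) ∧
      (d = 1 → α < 1 →
        (∫⁻ t in Set.Ioi (0 : ℝ), (P 0) {ω | layeredWalk d z S t ζ ω = 0}) ≠ ⊤) ∧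
      (d = 1 → Integrable (z 0) μ →
        (∫⁻ t in Set.Ioi (0 : ℝ), (P 0) {ω | layeredWalk d z S t ζ ω = 0}) = ⊤) := by
  have hquenched (ζ : Ωz) : ∫⁻ t in Ioi (0 : ℝ), P 0 {ω | layeredWalk d z S t ζ ω = 0}
      = ∫⁻ t in Ioi 0, quenchedReturn (fun x => P (Fin.cons 0 x)) (fun u ω => Fin.tail (S u ω))
          (fun y => ENNReal.ofReal (z y ζ)) t :=
    setLIntegral_congr_fun measurableSet_Ioi fun t ht =>
      measure_layeredWalk_eq_zero hS hz.nonneg (le_of_lt ht) ζ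
  simp_rw [hquenched, eventually_and, eventually_imp_distrib_left]
  refine ⟨hz.ae_lintegral_quenchedReturn_ne_top_of_two_le hα hS.tail, ?_, ?_⟩
  · rintro rfl hα1
    exact hz.ae_lintegral_quenchedReturn_ne_top_of_lt_one hα hα1 hS.tail
  · rintro rfl hint
    exact hz.ae_lintegral_quenchedReturn_eq_top hS.tail hint
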